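/- For a compact metric space X and an integer n, the following are equivalent: (1) dim_F X ≤ n for every field F; (2) dim_{Z/pZ} X ≤ n for every prime p and dim_Q X ≤ n; (3) dim_Z(X × X) ≤ 2n + 1. -/

import Mathlib

open Set Function

open scoped ENNReal

noncomputable section

/-! ### Alexander–Spanier (Čech) cohomology -/

namespace AS

variable (A : Type*) [AddCommGroup A]

/-- Alexander–Spanier `n`-cochains on `X` with coefficients in `A`. -/
abbrev Cochain (X : Type*) (n : ℕ) : Type _ := (Fin (n + 1) → X) → A

/-- The Alexander–Spanier coboundary operator. -/
def d (X : Type*) (n : ℕ) : Cochain A X n →+ Cochain A X (n + 1) :=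
  AddMonoidHom.mk' (fun φ s => ∑ i : Fin (n + 2), ((-1 : ℤ) ^ (i : ℕ)) • φ (s ∘ i.succAbove))
    (fun φ ψ => funext fun s => by
      simp [smul_add, Finset.sum_add_distrib])

/-- An open cover of `X`. -/
def IsOpenCover {X : Type*} [TopologicalSpace X] (U : Set (Set X)) : Prop :=
  (∀ u ∈ U, IsOpen u) ∧ ⋃₀ U = univ

/-- A tuple is `U`-small if it is contained in a single member of `U`. -/
def Small {X : Type*} (U : Set (Set X)) {k : ℕ} (s : Fin k → X) : Prop :=
  ∃ u ∈ U, ∀ i, s i ∈ u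

/-- The subgroup of cochains vanishing on all tuples that are small with respect to
some open cover (i.e. vanishing in a neighbourhood of the diagonal). -/
def locZero (X : Type*) [TopologicalSpace X] (n : ℕ) : AddSubgroup (Cochain A X n) where
  carrier := {φ | ∃ U, IsOpenCover U ∧ ∀ s : Fin (n + 1) → X, Small U s → φ s = 0}
  zero_mem' := ⟨{univ}, ⟨fun u hu => by rw [mem_singleton_iff] at hu; rw [hu]; exact isOpen_univ,
      by simp⟩, fun s _ => rfl⟩
  add_mem' := by
    rintro φ ψ ⟨U, ⟨hUo, hUc⟩, hφ⟩ ⟨W, ⟨hWo, hWc⟩, hψ⟩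
    refine ⟨(fun p : Set X × Set X => p.1 ∩ p.2) '' (U ×ˢ W), ⟨?_, ?_⟩, ?_⟩
    · rintro _ ⟨⟨u, w⟩, ⟨hu, hw⟩, rfl⟩
      exact (hUo u hu).inter (hWo w hw)
    · apply eq_univ_of_forall
      intro x
      have hx1 : x ∈ ⋃₀ U := hUc ▸ mem_univ x
      have hx2 : x ∈ ⋃₀ W := hWc ▸ mem_univ x
      obtain ⟨u, hu, hxu⟩ := hx1
      obtain ⟨w, hw, hxw⟩ := hx2
      exact ⟨u ∩ w, ⟨⟨u, w⟩, ⟨hu, hw⟩, rfl⟩, hxu, hxw⟩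
    · rintro s ⟨_, ⟨⟨u, w⟩, ⟨hu, hw⟩, rfl⟩, hs⟩
      have h1 : φ s = 0 := hφ s ⟨u, hu, fun i => (hs i).1⟩
      have h2 : ψ s = 0 := hψ s ⟨w, hw, fun i => (hs i).2⟩
      show φ s + ψ s = 0
      rw [h1, h2, add_zero]
  neg_mem' := by
    rintro φ ⟨U, hU, hφ⟩
    exact ⟨U, hU, fun s hs => by show -φ s = 0; rw [hφ s hs, neg_zero]⟩

/-- The Alexander–Spanier cochain complex: cochains modulo locally zero cochains. -/
abbrev QC (X : Type*) [TopologicalSpace X] (n : ℕ) : Type _ := Cochain A X n ⧸ locZero A X n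

lemma d_locZero (X : Type*) [TopologicalSpace X] (n : ℕ) :
    locZero A X n ≤ (locZero A X (n + 1)).comap (d A X n) := by
  rintro φ ⟨U, hU, hφ⟩
  refine ⟨U, hU, fun s ⟨u, hu, hs⟩ => ?_⟩
  show (d A X n φ) s = 0
  have : ∀ i : Fin (n + 2), φ (s ∘ i.succAbove) = 0 :=
    fun i => hφ _ ⟨u, hu, fun j => hs _⟩
  simp only [d, AddMonoidHom.mk'_apply]
  exact Finset.sum_eq_zero fun i _ => by rw [this i, smul_zero]

/-- The induced differential on the Alexander–Spanier complex. -/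
def dQ (X : Type*) [TopologicalSpace X] (n : ℕ) : QC A X n →+ QC A X (n + 1) :=
  QuotientAddGroup.map _ _ (d A X n) (d_locZero A X n)

/-- Cocycles. -/
def cocycles (X : Type*) [TopologicalSpace X] (n : ℕ) : AddSubgroup (QC A X n) :=
  (dQ A X n).ker

/-- Coboundaries (the trivial subgroup in degree `0`). -/
def cobounds (X : Type*) [TopologicalSpace X] (n : ℕ) : AddSubgroup (QC A X n) :=
  match n with
  | 0 => ⊥
  | (m + 1) => (dQ A X m).range

/-- Alexander–Spanier cohomology of `X` with coefficients in `A`; for paracompact Hausdorff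
(e.g. metric) spaces this is naturally isomorphic to Čech cohomology. -/
def ASH (n : ℕ) (X : Type*) [TopologicalSpace X] : Type _ :=
  ↥(cocycles A X n) ⧸ ((cobounds A X n).comap (cocycles A X n).subtype)

instance (n : ℕ) (X : Type*) [TopologicalSpace X] : AddCommGroup (ASH A n X) :=
  inferInstanceAs (AddCommGroup
    (↥(cocycles A X n) ⧸ ((cobounds A X n).comap (cocycles A X n).subtype)))

end AS

namespace AS

variable (A : Type*) [AddCommGroup A]

/-- Pullback of Alexander–Spanier cochains along a map. -/
def pull {X Y : Type*} (f : X → Y) (n : ℕ) : Cochain A Y n →+ Cochain A X n :=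
  AddMonoidHom.mk' (fun φ s => φ (f ∘ s)) (fun φ ψ => rfl)

lemma pull_d {X Y : Type*} (f : X → Y) (n : ℕ) (φ : Cochain A Y n) :
    pull A f (n + 1) (d A Y n φ) = d A X n (pull A f n φ) := rfl

lemma pull_locZero {X Y : Type*} [TopologicalSpace X] [TopologicalSpace Y] {f : X → Y}
    (hf : Continuous f) (n : ℕ) :
    locZero A Y n ≤ (locZero A X n).comap (pull A f n) := by
  rintro φ ⟨U, ⟨hUo, hUc⟩, hφ⟩
  refine ⟨(f ⁻¹' ·) '' U, ⟨?_, ?_⟩, ?_⟩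
  · rintro _ ⟨u, hu, rfl⟩
    exact (hUo u hu).preimage hf
  · apply eq_univ_of_forall
    intro x
    have : f x ∈ ⋃₀ U := hUc ▸ mem_univ _
    obtain ⟨u, hu, hx⟩ := this
    exact ⟨f ⁻¹' u, ⟨u, hu, rfl⟩, hx⟩
  · rintro s ⟨_, ⟨u, hu, rfl⟩, hs⟩
    exact hφ _ ⟨u, hu, fun i => hs i⟩

/-- Pullback on the Alexander–Spanier complex. -/
def pullQ {X Y : Type*} [TopologicalSpace X] [TopologicalSpace Y] {f : X → Y}
    (hf : Continuous f) (n : ℕ) : QC A Y n →+ QC A X n :=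
  QuotientAddGroup.map _ _ (pull A f n) (pull_locZero A hf n)

lemma pullQ_d {X Y : Type*} [TopologicalSpace X] [TopologicalSpace Y] {f : X → Y}
    (hf : Continuous f) (n : ℕ) (x : QC A Y n) :
    pullQ A hf (n + 1) (dQ A Y n x) = dQ A X n (pullQ A hf n x) := by
  refine QuotientAddGroup.induction_on x ?_
  intro φ
  simp only [pullQ, dQ, QuotientAddGroup.map_mk, pull_d]

lemma pullQ_cocycles {X Y : Type*} [TopologicalSpace X] [TopologicalSpace Y] {f : X → Y}
    (hf : Continuous f) (n : ℕ) {x : QC A Y n} (hx : x ∈ cocycles A Y n) :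
    pullQ A hf n x ∈ cocycles A X n := by
  have : dQ A Y n x = 0 := hx
  show dQ A X n (pullQ A hf n x) = 0
  rw [← pullQ_d, this, map_zero]

lemma pullQ_cobounds {X Y : Type*} [TopologicalSpace X] [TopologicalSpace Y] {f : X → Y}
    (hf : Continuous f) (n : ℕ) {x : QC A Y n} (hx : x ∈ cobounds A Y n) :
    pullQ A hf n x ∈ cobounds A X n := by
  match n with
  | 0 =>
    have : x = 0 := hx
    rw [this, map_zero]
    exact (⊥ : AddSubgroup (QC A X 0)).zero_mem
  | (m + 1) =>
    obtain ⟨y, rfl⟩ := hx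
    exact ⟨pullQ A hf m y, (pullQ_d A hf m y).symm⟩

/-- The map on cocycles induced by a continuous map. -/
def pullZ {X Y : Type*} [TopologicalSpace X] [TopologicalSpace Y] {f : X → Y}
    (hf : Continuous f) (n : ℕ) : ↥(cocycles A Y n) →+ ↥(cocycles A X n) :=
  AddMonoidHom.codRestrict ((pullQ A hf n).comp (cocycles A Y n).subtype) _
    (fun x => pullQ_cocycles A hf n x.2)

/-- The homomorphism induced on Alexander–Spanier (Čech) cohomology by a continuous map.
Note the contravariance: a map `f : X → Y` induces `ASHmap : ASH A n Y →+ ASH A n X`. -/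
def ASHmap {X Y : Type*} [TopologicalSpace X] [TopologicalSpace Y] {f : X → Y}
    (hf : Continuous f) (n : ℕ) : ASH A n Y →+ ASH A n X :=
  QuotientAddGroup.map _ _ (pullZ A hf n) (by
    rintro ⟨x, hx⟩ hmem
    have : x ∈ cobounds A Y n := hmem
    exact pullQ_cobounds A hf n this)

end AS

namespace AS

variable (A : Type*) [AddCommGroup A]

/-- Čech cohomology with compact supports: for compact `B` this is the (Alexander–Spanier =
Čech) cohomology of `B` itself, and for noncompact `B` it is that of the one-point
compactification of `B`. -/
def Hc (n : ℕ) (B : Type*) [TopologicalSpace B] : Type _ :=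
  open scoped Classical in
  if CompactSpace B then ASH A n B else ASH A n (OnePoint B)

end AS

/-- The cohomological dimension `dim_A X` of a space `X` with respect to an abelian group `A`:
the supremum of the integers `n` for which there is a locally compact subset `B ⊆ X` with
`H^n_c(B; A) ≠ 0`. -/
noncomputable def cohDim (A : Type*) [AddCommGroup A] (X : Type*) [TopologicalSpace X] : ℕ∞ :=
  sSup {e : ℕ∞ | ∃ n : ℕ, e = (n : ℕ∞) ∧
    ∃ B : Set X, LocallyCompactSpace B ∧ Nontrivial (AS.Hc A n B)}

namespace ListChain

variable {R : Type*} [CommRing R] {X Y : Type*}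

/-! ### Linear maps out of free modules -/

lemma map_mem {ι E : Type*} [AddCommGroup E] [Module R E] (f : (ι →₀ R) →ₗ[R] E) {s : Set ι}
    {N : Submodule R E} (h : ∀ i ∈ s, f (Finsupp.single i 1) ∈ N) {z : ι →₀ R}
    (hz : z ∈ Finsupp.supported R R s) : f z ∈ N := by
  rw [Finsupp.supported_eq_span_single] at hz
  have : Submodule.span R ((fun i => Finsupp.single i (1 : R)) '' s) ≤ N.comap f := by
    rw [Submodule.span_le]
    rintro _ ⟨i, hi, rfl⟩
    exact h i hi
  exact this hz

lemma map_eq {ι E : Type*} [AddCommGroup E] [Module R E] (f g : (ι →₀ R) →ₗ[R] E) {s : Set ι}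
    (h : ∀ i ∈ s, f (Finsupp.single i 1) = g (Finsupp.single i 1)) {z : ι →₀ R}
    (hz : z ∈ Finsupp.supported R R s) : f z = g z := by
  have := map_mem (f - g) (N := ⊥) (s := s) (fun i hi => by simp [h i hi]) hz
  simpa [sub_eq_zero] using this

lemma single_mem {ι : Type*} {s : Set ι} {i : ι} (h : i ∈ s) (r : R) :
    Finsupp.single i r ∈ Finsupp.supported R R s :=
  Finsupp.single_mem_supported R r h

lemma supported_mono' {ι : Type*} {s t : Set ι} {z : ι →₀ R} (hz : z ∈ Finsupp.supported R R s)
    (h : ∀ i ∈ s, i ∈ t) : z ∈ Finsupp.supported R R t :=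
  Finsupp.supported_mono h hz

/-! ### The complex of lists -/

variable (R) in
/-- The augmented complex of ordered chains on `X`: a list of length `k + 1` is a `k`-simplex, the
empty list carries the augmentation. -/
abbrev Ch (X : Type*) := List X →₀ R

/-- The coboundary of a cochain on lists. -/
def dL {A : Type*} [AddCommGroup A] : (List X → A) → List X → A
  | _, [] => 0
  | c, x :: l => c l - dL (fun m => c (x :: m)) l

/-- Prepending a vertex. -/
def cone (x : X) : Ch R X →ₗ[R] Ch R X := Finsupp.lmapDomain R R (List.cons x)

/-- The boundary of a list. -/
def bdl : List X → Ch R X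
  | [] => 0
  | x :: l => Finsupp.single l 1 - cone x (bdl l)

/-- The boundary operator. -/
def bd : Ch R X →ₗ[R] Ch R X := Finsupp.linearCombination R bdl

/-- Evaluation of a cochain on chains. -/
abbrev ev (c : List X → R) : Ch R X →ₗ[R] R := Finsupp.linearCombination R c

@[simp] lemma cone_single (x : X) (l : List X) (r : R) :
    cone x (Finsupp.single l r) = Finsupp.single (x :: l) r := by
  simp [cone]

@[simp] lemma bd_single (l : List X) : bd (Finsupp.single l (1 : R)) = bdl l := by
  simp [bd]

lemma bd_cone (x : X) (z : Ch R X) : bd (cone x z) = z - cone x (bd z) := by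
  have : bd ∘ₗ cone x = LinearMap.id - cone x ∘ₗ (bd : Ch R X →ₗ[R] _) := by
    ext1 l
    ext1
    simp [bdl]
  exact LinearMap.congr_fun this z

lemma bd_bdl (l : List X) : bd (bdl l : Ch R X) = 0 := by
  induction l with
  | nil => simp [bdl]
  | cons x l ih => simp [bdl, bd_cone, ih]

lemma bd_bd (z : Ch R X) : bd (bd z) = 0 := by
  have : bd ∘ₗ bd = (0 : Ch R X →ₗ[R] Ch R X) := by
    ext1 l
    ext1
    simp [bd_bdl]
  exact LinearMap.congr_fun this z

lemma ev_cone (c : List X → R) (x : X) (z : Ch R X) :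
    ev c (cone x z) = ev (fun m => c (x :: m)) z := by
  simp [cone, ev, Finsupp.lmapDomain_apply, Finsupp.linearCombination_mapDomain, Function.comp_def]

lemma dL_eq_ev (c : List X → R) (l : List X) : dL c l = ev c (bdl l) := by
  induction l generalizing c with
  | nil => simp [dL, bdl]
  | cons x l ih => simp [dL, bdl, ih, ev_cone]

lemma bdl_mem (l : List X) :
    bdl l ∈ Finsupp.supported R R {m : List X | m.Sublist l ∧ m.length + 1 = l.length} := by
  induction l with
  | nil => simp [bdl]
  | cons x l ih =>
    refine Submodule.sub_mem _ (single_mem (by exact ⟨List.sublist_cons_self _ _, rfl⟩) _) ?_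
    refine map_mem (cone x) (fun m hm => ?_) ih
    rw [cone_single]
    exact single_mem (by exact ⟨hm.1.cons_cons _, by simpa using hm.2⟩) _

/-- If two cochains agree on all facets of `l`, so do their coboundaries. -/
lemma dL_congr {A : Type*} [AddCommGroup A] {c c' : List X → A} {l : List X}
    (h : ∀ m : List X, m.Sublist l → m.length + 1 = l.length → c m = c' m) : dL c l = dL c' l := by
  induction l generalizing c c' with
  | nil => rfl
  | cons x l ih =>
    simp only [dL]
    rw [h l (List.sublist_cons_self _ _) rfl]
    congr 1
    exact ih fun m hm hl => h _ (hm.cons_cons _) (by simpa using hl)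

lemma dL_map {A B : Type*} [AddCommGroup A] [AddCommGroup B] (f : A →+ B) (c : List X → A)
    (l : List X) : dL (fun m => f (c m)) l = f (dL c l) := by
  induction l generalizing c with
  | nil => simp [dL]
  | cons x l ih => simp [dL, ih]

lemma dL_zero {A : Type*} [AddCommGroup A] (l : List X) : dL (fun _ => (0 : A)) l = 0 := by
  induction l with
  | nil => rfl
  | cons x l ih => simp [dL, ih]

lemma dL_add {A : Type*} [AddCommGroup A] (c c' : List X → A) (l : List X) :
    dL (fun m => c m + c' m) l = dL c l + dL c' l := by
  induction l generalizing c c' with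
  | nil => simp [dL]
  | cons x l ih => simp only [dL, ih]; abel

lemma dL_sub {A : Type*} [AddCommGroup A] (c c' : List X → A) (l : List X) :
    dL (fun m => c m - c' m) l = dL c l - dL c' l := by
  induction l generalizing c c' with
  | nil => simp [dL]
  | cons x l ih => simp only [dL, ih]; abel

lemma dL_dL {A : Type*} [AddCommGroup A] (c : List X → A) (l : List X) :
    dL (dL c) l = 0 := by
  induction l generalizing c with
  | nil => simp [dL]
  | cons x l ih =>
    have := dL_sub c (dL fun m => c (x :: m)) l
    simp only [dL, this, ih, sub_zero, sub_self]

lemma dL_sum {A ι : Type*} [AddCommGroup A] (s : Finset ι) (c : ι → List X → A) (l : List X) :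
    dL (fun m => ∑ i ∈ s, c i m) l = ∑ i ∈ s, dL (c i) l := by
  classical
  induction s using Finset.induction_on with
  | empty => simpa using dL_zero l
  | insert i s hi ih => simp only [Finset.sum_insert hi, dL_add, ih]

lemma dL_comp_map {A : Type*} [AddCommGroup A] (r : X → Y) (c : List Y → A) (l : List X) :
    dL (fun m => c (m.map r)) l = dL c (l.map r) := by
  induction l generalizing c with
  | nil => simp [dL]
  | cons x l ih => simp [dL, ← ih]

/-- If a cochain vanishes on all facets, its coboundary vanishes. -/
lemma dL_eq_zero {A : Type*} [AddCommGroup A] {c : List X → A} {l : List X}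
    (h : ∀ m : List X, m.Sublist l → m.length + 1 = l.length → c m = 0) : dL c l = 0 :=
  (dL_congr h).trans (dL_zero l)

/-- Chains of lists of length `k` with entries in `Q`. -/
def Lst (R : Type*) [CommRing R] {X : Type*} (k : ℕ) (Q : Set X) : Submodule R (Ch R X) :=
  Finsupp.supported R R {l | l.length = k ∧ ∀ x ∈ l, x ∈ Q}

lemma Lst_mono {k : ℕ} {Q Q' : Set X} (h : Q ⊆ Q') : Lst R k Q ≤ Lst R k Q' :=
  Finsupp.supported_mono fun _ hl => ⟨hl.1, fun x hx => h (hl.2 x hx)⟩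

lemma bdl_mem_Lst {k : ℕ} {Q : Set X} {l : List X} (hl : l.length = k + 1) (h : ∀ x ∈ l, x ∈ Q) :
    bdl l ∈ Lst R k Q :=
  supported_mono' (bdl_mem l) fun _ hm => ⟨by have := hm.2; omega, fun x hx => h x (hm.1.subset hx)⟩

lemma bd_mem_Lst {k : ℕ} {Q : Set X} {z : Ch R X} (hz : z ∈ Lst R (k + 1) Q) : bd z ∈ Lst R k Q :=
  map_mem bd (fun l hl => by rw [bd_single]; exact bdl_mem_Lst hl.1 hl.2) hz

lemma cone_mem_Lst {k : ℕ} {Q : Set X} {q : X} (hq : q ∈ Q) {z : Ch R X} (hz : z ∈ Lst R k Q) :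
    cone q z ∈ Lst R (k + 1) Q :=
  map_mem (cone q) (fun l hl => by
    rw [cone_single]
    exact single_mem (by exact ⟨by simp [hl.1], by simpa [hq] using hl.2⟩) _) hz

lemma Lst_exact {k : ℕ} {Q : Set X} (hQ : Q.Nonempty) {z : Ch R X} (hz : z ∈ Lst R k Q)
    (hb : bd z = 0) : ∃ w ∈ Lst R (k + 1) Q, bd w = z := by
  obtain ⟨q, hq⟩ := hQ
  exact ⟨cone q z, cone_mem_Lst hq hz, by rw [bd_cone, hb, map_zero, sub_zero]⟩

/-! ### Acyclic carriers -/

/-- Acyclic carriers: solves `∂ H = u + ε H ∂` recursively, with prescribed values in degree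
zero. For `u = 0`, `ε = 1` this constructs chain maps, for `ε = -1` chain homotopies. -/
theorem exists_carried {ι E : Type*} [AddCommGroup E] [Module R E] (deg : ι → ℕ)
    (D : (ι →₀ R) →ₗ[R] (ι →₀ R)) (hD : ∀ z, D (D z) = 0) (dE : E →ₗ[R] E)
    (good : ι → Prop) (Z W : ι → Submodule R E) (u : (ι →₀ R) →ₗ[R] E) (ε : R)
    (hsub : ∀ b, good b → D (Finsupp.single b 1) ∈
      Finsupp.supported R R {b' | good b' ∧ deg b' < deg b ∧ W b' ≤ Z b})
    (hu : ∀ b, good b → 0 < deg b → u (Finsupp.single b 1) ∈ Z b)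
    (huD : ∀ b, good b → dE (u (Finsupp.single b 1)) + ε • u (D (Finsupp.single b 1)) = 0)
    (hex : ∀ b, good b → 0 < deg b → ∀ z ∈ Z b, dE z = 0 → ∃ w ∈ W b, dE w = z)
    (h0 : ι → E) (hW0 : ∀ b, good b → deg b = 0 → h0 b ∈ W b)
    (hd0 : ∀ b, good b → deg b = 0 → dE (h0 b) = u (Finsupp.single b 1)) :
    ∃ H : (ι →₀ R) →ₗ[R] E, ∀ b, good b → H (Finsupp.single b 1) ∈ W b ∧
      dE (H (Finsupp.single b 1)) = u (Finsupp.single b 1) + ε • H (D (Finsupp.single b 1)) ∧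
      (deg b = 0 → H (Finsupp.single b 1) = h0 b) := by
  classical
  let step : (b : ι) → ((b' : ι) → deg b' < deg b → E) → E := fun b rec =>
    if deg b = 0 then h0 b else
      if hz : ∃ w ∈ W b, dE w = u (Finsupp.single b 1) + ε • Finsupp.linearCombination R
          (fun b' => if h : deg b' < deg b then rec b' h else 0) (D (Finsupp.single b 1))
      then hz.choose else 0
  let Hf : ι → E := (measure deg).wf.fix step
  have hfix : ∀ b, Hf b = step b fun b' _ => Hf b' := fun b => (measure deg).wf.fix_eq step b
  let H := Finsupp.linearCombination R Hf
  have hH : ∀ b, H (Finsupp.single b 1) = Hf b := fun b => by simp [H]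
  have hcut : ∀ b, good b → Finsupp.linearCombination R
      (fun b' => if _ : deg b' < deg b then Hf b' else 0) (D (Finsupp.single b 1)) =
      H (D (Finsupp.single b 1)) := fun b hb =>
    map_eq _ _ (fun b' hb' => by simp [H, hb'.2.1]) (hsub b hb)
  refine ⟨H, ?_⟩
  suffices h : ∀ n b, deg b = n → good b → H (Finsupp.single b 1) ∈ W b ∧
      dE (H (Finsupp.single b 1)) = u (Finsupp.single b 1) + ε • H (D (Finsupp.single b 1)) ∧
      (deg b = 0 → H (Finsupp.single b 1) = h0 b) from fun b hb => h _ b rfl hb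
  intro n
  induction n using Nat.strong_induction_on with
  | _ n ih =>
    intro b hn hb
    by_cases h : deg b = 0
    · have e : Hf b = h0 b := by rw [hfix]; simp [step, h]
      have hs : D (Finsupp.single b (1 : R)) = 0 := by
        have := supported_mono' (t := ∅) (hsub b hb) (fun b' hb' => by have := hb'.2.1; omega)
        simpa using this
      rw [hH, e, hs, map_zero, smul_zero, add_zero]
      exact ⟨hW0 b hb h, hd0 b hb h, fun _ => rfl⟩
    · have h1 : u (Finsupp.single b 1) + ε • H (D (Finsupp.single b 1)) ∈ Z b := by
        refine Submodule.add_mem _ (hu b hb (by omega)) (Submodule.smul_mem _ _ ?_)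
        exact map_mem H (fun b' hb' => hb'.2.2 (ih _ (hn ▸ hb'.2.1) b' rfl hb'.1).1) (hsub b hb)
      have h2 : dE (u (Finsupp.single b 1) + ε • H (D (Finsupp.single b 1))) = 0 := by
        have : dE (H (D (Finsupp.single b 1))) = u (D (Finsupp.single b 1)) := by
          have := map_eq (dE ∘ₗ H) (u + ε • (H ∘ₗ D)) (fun b' hb' => by
            simpa using (ih _ (hn ▸ hb'.2.1) b' rfl hb'.1).2.1) (hsub b hb)
          simpa [hD] using this
        rw [map_add, map_smul, this, huD b hb]
      have hz := hex b hb (by omega) _ h1 h2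
      have e : Hf b = hz.choose := by
        rw [hfix]
        simp only [step, h, if_false, hcut b hb, hz, dif_pos]
      rw [hH, e]
      exact ⟨hz.choose_spec.1, hz.choose_spec.2, fun h' => absurd h' h⟩

lemma bd_mapDomain (r : X → Y) (z : Ch R X) :
    bd (Finsupp.lmapDomain R R (List.map r) z) = Finsupp.lmapDomain R R (List.map r) (bd z) := by
  have h : ∀ l : List X, bdl (l.map r) = Finsupp.lmapDomain R R (List.map r) (bdl l) := by
    intro l
    induction l with
    | nil => simp [bdl]
    | cons x l ih =>
      have : cone (r x) ∘ₗ Finsupp.lmapDomain R R (List.map r) =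
          Finsupp.lmapDomain R R (List.map r) ∘ₗ (cone x : Ch R X →ₗ[R] _) := by
        ext1 m
        ext1
        simp
      have h2 := LinearMap.congr_fun this (bdl l)
      simp only [LinearMap.comp_apply] at h2
      simp only [List.map_cons, bdl, ih, map_sub, h2]
      simp
  refine map_eq (s := univ) (bd ∘ₗ Finsupp.lmapDomain R R (List.map r))
    (Finsupp.lmapDomain R R (List.map r) ∘ₗ bd) (fun l _ => ?_) (by simp)
  simp [h]

lemma finite_range_comp_map {A : Type*} [Zero A] {r : X → X} (hr : (range r).Finite) (k : ℕ)
    (c : List X → A) : (range fun l : List X => if l.length = k then c (l.map r) else 0).Finite := by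
  have hf : {l : List X | l.length = k ∧ ∀ x ∈ l, x ∈ range r}.Finite := by
    have := hr.to_subtype
    have h2 := List.finite_length_eq (range r) k
    refine (h2.image (List.map Subtype.val)).subset ?_
    rintro l ⟨hl, hx⟩
    lift l to List (range r) using hx
    exact ⟨l, by simpa using hl, rfl⟩
  refine ((hf.image c).union (finite_singleton 0)).subset ?_
  rintro _ ⟨l, rfl⟩
  by_cases h : l.length = k
  · exact Or.inl ⟨l.map r, ⟨by simpa using h, by simp⟩, by simp [h]⟩
  · exact Or.inr (by simp [h])

/-! ### Locally vanishing cochains and relative vanishing -/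

section Loc

variable [MetricSpace X] [MetricSpace Y]

/-- A list all of whose entries are `δ`-close to each other. -/
def Sml (δ : ℝ) (l : List X) : Prop := ∀ x ∈ l, ∀ y ∈ l, dist x y < δ

lemma Sml.sub {δ : ℝ} {l m : List X} (h : Sml δ l) (hm : m ⊆ l) : Sml δ m :=
  fun x hx y hy => h x (hm hx) y (hm hy)

lemma Sml.mono {δ δ' : ℝ} {l : List X} (h : Sml δ l) (hd : δ ≤ δ') : Sml δ' l :=
  fun x hx y hy => (h x hx y hy).trans_le hd

/-- The cochain `c` vanishes on all sufficiently small `k`-element lists near `S`. -/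
def LocZ {A : Type*} [Zero A] (k : ℕ) (S : Set X) (c : List X → A) : Prop :=
  ∃ δ > 0, ∀ l : List X, l.length = k → Sml δ l → (∃ x ∈ l, ∃ a ∈ S, dist x a < δ) → c l = 0

lemma LocZ.univ_iff {A : Type*} [Zero A] {k : ℕ} {c : List X → A} :
    LocZ (k + 1) univ c ↔ ∃ δ > 0, ∀ l : List X, l.length = k + 1 → Sml δ l → c l = 0 := by
  constructor
  · rintro ⟨δ, hδ, h⟩
    refine ⟨δ, hδ, fun l hl hs => h l hl hs ?_⟩
    obtain ⟨x, hx⟩ := List.exists_mem_of_length_pos (l := l) (by omega)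
    exact ⟨x, hx, x, trivial, by simpa using hδ⟩
  · rintro ⟨δ, hδ, h⟩
    exact ⟨δ, hδ, fun l hl hs _ => h l hl hs⟩

lemma LocZ.mono {A : Type*} [Zero A] {k : ℕ} {S S' : Set X} {c : List X → A} (h : LocZ k S c)
    (hS : S' ⊆ S) : LocZ k S' c := by
  obtain ⟨δ, hδ, h⟩ := h
  exact ⟨δ, hδ, fun l hl hs ⟨x, hx, a, ha, hd⟩ => h l hl hs ⟨x, hx, a, hS ha, hd⟩⟩

lemma LocZ.imp {A B : Type*} [Zero A] [Zero B] {k : ℕ} {S : Set X} {c : List X → A}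
    {c' : List X → B} (h : LocZ k S c) (hi : ∀ l : List X, l.length = k → c l = 0 → c' l = 0) :
    LocZ k S c' := by
  obtain ⟨δ, hδ, h⟩ := h
  exact ⟨δ, hδ, fun l hl hs hn => hi l hl (h l hl hs hn)⟩

lemma LocZ.imp₂ {A B C : Type*} [Zero A] [Zero B] [Zero C] {k : ℕ} {S : Set X} {c : List X → A}
    {c' : List X → B} {c'' : List X → C} (h : LocZ k S c) (h' : LocZ k S c')
    (hi : ∀ l : List X, l.length = k → c l = 0 → c' l = 0 → c'' l = 0) : LocZ k S c'' := by
  obtain ⟨δ, hδ, h⟩ := h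
  obtain ⟨δ', hδ', h'⟩ := h'
  refine ⟨min δ δ', lt_min hδ hδ', fun l hl hs ⟨x, hx, a, ha, hd⟩ => hi l hl ?_ ?_⟩
  · exact h l hl (hs.mono (min_le_left _ _)) ⟨x, hx, a, ha, hd.trans_le (min_le_left _ _)⟩
  · exact h' l hl (hs.mono (min_le_right _ _)) ⟨x, hx, a, ha, hd.trans_le (min_le_right _ _)⟩

lemma LocZ.zero {A : Type*} [Zero A] {k : ℕ} {S : Set X} : LocZ k S (fun _ => (0 : A)) :=
  ⟨1, one_pos, fun _ _ _ _ => rfl⟩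

lemma LocZ.all {A ι : Type*} [Zero A] {k : ℕ} {S : Set X} (s : Finset ι) {c : ι → List X → A}
    (h : ∀ i ∈ s, LocZ k S (c i)) : ∃ δ > 0, ∀ i ∈ s, ∀ l : List X, l.length = k → Sml δ l →
      (∃ x ∈ l, ∃ a ∈ S, dist x a < δ) → c i l = 0 := by
  classical
  induction s using Finset.induction_on with
  | empty => exact ⟨1, one_pos, by simp⟩
  | insert j s hj ih =>
    obtain ⟨δ, hδ, h1⟩ := ih fun i hi => h i (Finset.mem_insert_of_mem hi)
    obtain ⟨δ', hδ', h2⟩ := h j (Finset.mem_insert_self _ _)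
    refine ⟨min δ δ', lt_min hδ hδ', fun i hi l hl hs ⟨x, hx, a, ha, hd⟩ => ?_⟩
    rcases Finset.mem_insert.1 hi with rfl | hi
    · exact h2 l hl (hs.mono (min_le_right _ _)) ⟨x, hx, a, ha, hd.trans_le (min_le_right _ _)⟩
    · exact h1 i hi l hl (hs.mono (min_le_left _ _)) ⟨x, hx, a, ha, hd.trans_le (min_le_left _ _)⟩

lemma LocZ.sum {A ι : Type*} [AddCommMonoid A] {k : ℕ} {S : Set X} (s : Finset ι)
    {c : ι → List X → A} (h : ∀ i ∈ s, LocZ k S (c i)) : LocZ k S (fun l => ∑ i ∈ s, c i l) := by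
  obtain ⟨δ, hδ, h⟩ := LocZ.all s h
  exact ⟨δ, hδ, fun l hl hs hn => Finset.sum_eq_zero fun i hi => h i hi l hl hs hn⟩

lemma LocZ.dL {A : Type*} [AddCommGroup A] {k : ℕ} {S : Set X} {c : List X → A}
    (h : LocZ (k + 1) S c) : LocZ (k + 2) S (dL c) := by
  obtain ⟨δ, hδ, h⟩ := h
  refine ⟨δ / 2, by positivity, fun l hl hs ⟨x, hx, a, ha, hd⟩ => dL_eq_zero fun m hm hml => ?_⟩
  obtain ⟨y, hy⟩ := List.exists_mem_of_length_pos (l := m) (by omega)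
  refine h m (by omega) ((hs.sub hm.subset).mono (by linarith)) ⟨y, hy, a, ha, ?_⟩
  have := hs y (hm.subset hy) x hx
  linarith [dist_triangle y x a]

/-- Vanishing of the relative cohomology `H^k(X, S; R)`, for `k ≥ 1`. -/
def RelVan (R : Type*) [CommRing R] {X : Type*} [MetricSpace X] (k : ℕ) (S : Set X) : Prop :=
  ∀ c : List X → R, LocZ (k + 2) univ (dL c) → LocZ (k + 1) S c →
    ∃ b : List X → R, LocZ k S b ∧ LocZ (k + 1) univ (fun l => c l - dL b l)

/-- A chain map close to the identity does not change relative cohomology classes. -/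
theorem exists_homotopy {k : ℕ} {S : Set X} {c : List X → R} (hc : LocZ (k + 2) univ (dL c))
    (hS : LocZ (k + 1) S c) : ∃ ρ > 0, ∀ P : Ch R X →ₗ[R] Ch R X, (∀ z, bd (P z) = P (bd z)) →
      P (Finsupp.single [] 1) = Finsupp.single [] 1 →
      (∀ l, P (Finsupp.single l 1) ∈ Lst R l.length univ) →
      (∃ δ > 0, ∀ l, Sml δ l → l ≠ [] →
        P (Finsupp.single l 1) ∈ Lst R l.length {q | ∃ x ∈ l, dist q x < ρ}) →
      ∃ b, LocZ k S b ∧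
        LocZ (k + 1) univ (fun l => c l - ev c (P (Finsupp.single l 1)) - dL b l) := by
  obtain ⟨δ₁, hδ₁, hc⟩ := LocZ.univ_iff.1 hc
  obtain ⟨δ₂, hδ₂, hS⟩ := hS
  set δ₀ := min δ₁ δ₂ with hδ₀
  have hpos : 0 < δ₀ := lt_min hδ₁ hδ₂
  have le1 : δ₀ ≤ δ₁ := min_le_left _ _
  have le2 : δ₀ ≤ δ₂ := min_le_right _ _
  refine ⟨δ₀ / 4, by positivity, fun P hP hP0 hPl ⟨δ, hδ, hPs⟩ => ?_⟩
  let Q : List X → Set X := fun l => {q | Sml δ l → ∃ x ∈ l, dist q x < δ₀ / 4}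
  have hQl : ∀ l : List X, ∀ x ∈ l, x ∈ Q l := fun l x hx _ =>
    ⟨x, hx, by rw [dist_self]; positivity⟩
  have hQm : ∀ l m : List X, m ⊆ l → Q m ⊆ Q l := fun l m hm q hq hs => by
    obtain ⟨x, hx, hd⟩ := hq (hs.sub hm)
    exact ⟨x, hm hx, hd⟩
  obtain ⟨H, hH⟩ := exists_carried (R := R) (ι := List X) List.length bd bd_bd bd (fun _ => True)
    (fun l => Lst R l.length (Q l)) (fun l => Lst R (l.length + 1) (Q l))
    (LinearMap.id - P) (-1)
    (fun l _ => by
      rw [bd_single]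
      refine supported_mono' (bdl_mem l) fun m hm => ⟨trivial, by have := hm.2; omega, ?_⟩
      rw [hm.2]
      exact Lst_mono (hQm _ _ hm.1.subset))
    (fun l _ hl => by
      refine Submodule.sub_mem _ (single_mem (by exact ⟨rfl, hQl l⟩) _) ?_
      by_cases hs : Sml δ l
      · exact Lst_mono (fun q hq _ => hq) (hPs l hs (by rintro rfl; simp at hl))
      · exact Lst_mono (fun q _ h => absurd h hs) (hPl l))
    (fun l _ => by simp [hP])
    (fun l _ hl z hz hd => Lst_exact (by
      obtain ⟨x, hx⟩ := List.exists_mem_of_length_pos hl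
      exact ⟨x, hQl l x hx⟩) hz hd)
    (fun _ => 0) (fun _ _ _ => Submodule.zero_mem _)
    (fun l _ hl => by
      obtain rfl : l = [] := List.eq_nil_of_length_eq_zero hl
      simp [hP0])
  have hW : ∀ l, Sml δ l → Sml (δ₀ / 4) l → H (Finsupp.single l 1) ∈
      Finsupp.supported R R {m : List X | m.length = l.length + 1 ∧ Sml δ₀ m ∧
        ∀ y ∈ m, ∃ x ∈ l, dist y x < δ₀ / 4} := fun l hs hs' =>
    supported_mono' (hH l trivial).1 fun m hm => by
      have h2 : ∀ y ∈ m, ∃ x ∈ l, dist y x < δ₀ / 4 := fun y hy => hm.2 y hy hs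
      refine ⟨hm.1, fun x hx y hy => ?_, h2⟩
      obtain ⟨x', hx', h⟩ := h2 x hx
      obtain ⟨y', hy', h'⟩ := h2 y hy
      have := hs' x' hx' y' hy'
      have h4 := dist_triangle4 x x' y' y
      rw [dist_comm y' y] at h4
      linarith
  refine ⟨fun l => ev c (H (Finsupp.single l 1)), ?_, ?_⟩
  · refine ⟨min δ (δ₀ / 4), lt_min hδ (by positivity), fun l hl hs ⟨x, hx, a, ha, hd⟩ => ?_⟩
    have hs2 := hs.mono (min_le_right _ _)
    refine (map_eq (ev c) 0 (fun m hm => ?_) (hW l (hs.mono (min_le_left _ _)) hs2)).trans rfl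
    obtain ⟨y, hy⟩ := List.exists_mem_of_length_pos (l := m) (by have := hm.1; omega)
    obtain ⟨x', hx', h⟩ := hm.2.2 y hy
    have h1 := hs2 x' hx' x hx
    have h2 := hd.trans_le (min_le_right _ _)
    have h4 := dist_triangle4 y x' x a
    have := hS m (by rw [hm.1, hl]) (hm.2.1.mono le2) ⟨y, hy, a, ha, by linarith⟩
    simp [this]
  · refine LocZ.univ_iff.2 ⟨min δ (δ₀ / 4), lt_min hδ (by positivity), fun l hl hs => ?_⟩
    have h0 : ev c (bd (H (Finsupp.single l 1))) = 0 := by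
      refine (map_eq (ev c ∘ₗ bd) 0 (fun m hm => ?_) (hW l (hs.mono (min_le_left _ _))
        (hs.mono (min_le_right _ _)))).trans rfl
      simp only [LinearMap.comp_apply, bd_single, LinearMap.zero_apply, ← dL_eq_ev]
      exact hc m (by rw [hm.1, hl]) (hm.2.1.mono le1)
    have h1 : dL (fun l => ev c (H (Finsupp.single l 1))) l = ev c (H (bdl l)) := by
      rw [dL_eq_ev]
      exact map_eq (s := univ) (ev fun l => ev c (H (Finsupp.single l 1))) (ev c ∘ₗ H)
        (fun m _ => by simp) (by simp)
    rw [(hH l trivial).2.1] at h0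
    simp only [bd_single, LinearMap.sub_apply, LinearMap.id_apply, map_add, map_sub, map_smul]
      at h0
    rw [h1]
    simpa [sub_eq_add_neg] using h0

/-- Precomposing with a (possibly discontinuous) self-map close to the identity. -/
theorem exists_homotopy_map {k : ℕ} {S : Set X} {c : List X → R} (hc : LocZ (k + 2) univ (dL c))
    (hS : LocZ (k + 1) S c) : ∃ ρ > 0, ∀ r : X → X, (∀ x, dist (r x) x < ρ) →
      ∃ b, LocZ k S b ∧ LocZ (k + 1) univ (fun l => c l - c (l.map r) - dL b l) := by
  obtain ⟨ρ, hρ, h⟩ := exists_homotopy hc hS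
  refine ⟨ρ, hρ, fun r hr => ?_⟩
  obtain ⟨b, hb, hb'⟩ := h (Finsupp.lmapDomain R R (List.map r)) (bd_mapDomain r) (by simp)
    (fun l => by
      simp only [Finsupp.lmapDomain_apply, Finsupp.mapDomain_single]
      exact single_mem (by simp) _)
    ⟨1, one_pos, fun l _ _ => by
      simp only [Finsupp.lmapDomain_apply, Finsupp.mapDomain_single]
      refine single_mem (by
        refine ⟨by simp, fun y hy => ?_⟩
        obtain ⟨x, hx, rfl⟩ := List.mem_map.1 hy
        exact ⟨x, hx, hr x⟩) _⟩
  exact ⟨b, hb, by simpa using hb'⟩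

lemma exists_finite_range [CompactSpace X] {ρ : ℝ} (hρ : 0 < ρ) :
    ∃ r : X → X, (range r).Finite ∧ ∀ x, dist (r x) x < ρ := by
  obtain ⟨t, -, ht, hcov⟩ := finite_cover_balls_of_compact (isCompact_univ (X := X)) hρ
  have : ∀ x : X, ∃ y ∈ t, dist y x < ρ := fun x => by
    have := hcov (mem_univ x)
    simp only [mem_iUnion, Metric.mem_ball] at this
    obtain ⟨y, hy, hd⟩ := this
    exact ⟨y, hy, by rwa [dist_comm]⟩
  choose r hr using this
  exact ⟨r, ht.subset (range_subset_iff.2 fun x => (hr x).1), fun x => (hr x).2⟩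

lemma LocZ.comp_map {A : Type*} [Zero A] {k : ℕ} {S : Set X} {c : List X → A} (h : LocZ k S c) :
    ∃ ρ > 0, ∀ r : X → X, (∀ x, dist (r x) x < ρ) → LocZ k S (fun l => c (l.map r)) := by
  obtain ⟨δ, hδ, h⟩ := h
  refine ⟨δ / 4, by positivity, fun r hr => ⟨δ / 4, by positivity,
    fun l hl hs ⟨x, hx, a, ha, hd⟩ => h _ (by simpa using hl) ?_
    ⟨r x, List.mem_map_of_mem hx, a, ha, ?_⟩⟩⟩
  · intro y hy z hz
    obtain ⟨y', hy', rfl⟩ := List.mem_map.1 hy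
    obtain ⟨z', hz', rfl⟩ := List.mem_map.1 hz
    have := dist_triangle4 (r y') y' z' (r z')
    have h1 := hr z'
    rw [dist_comm] at h1
    linarith [hr y', hs y' hy' z' hz']
  · linarith [dist_triangle (r x) x a, hr x]

/-- It suffices to consider cochains with finitely many values. -/
theorem relVan_of_finite [CompactSpace X] {k : ℕ} {S : Set X}
    (h : ∀ c : List X → R, (range c).Finite → LocZ (k + 2) univ (dL c) → LocZ (k + 1) S c →
      ∃ b : List X → R, LocZ k S b ∧ LocZ (k + 1) univ (fun l => c l - dL b l)) :
    RelVan R k S := by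
  intro c hc hS
  obtain ⟨ρ, hρ, hr⟩ := exists_homotopy_map hc hS
  obtain ⟨ρ₁, hρ₁, h1⟩ := hc.comp_map
  obtain ⟨ρ₂, hρ₂, h2⟩ := hS.comp_map
  obtain ⟨r, hfin, hd⟩ := exists_finite_range (X := X) (lt_min hρ (lt_min hρ₁ hρ₂))
  obtain ⟨b, hb, hb'⟩ := hr r fun x => (hd x).trans_le (min_le_left _ _)
  have h1 := h1 r fun x => (hd x).trans_le ((min_le_right _ _).trans (min_le_left _ _))
  have h2 := h2 r fun x => (hd x).trans_le ((min_le_right _ _).trans (min_le_right _ _))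
  obtain ⟨b₁, hb₁, hb₁'⟩ := h _ (finite_range_comp_map hfin (k + 1) c)
    (h1.imp fun l hl h0 => by
      rw [← dL_comp_map] at h0
      rw [← h0]
      exact dL_congr fun m _ hm => by simp [show m.length = k + 1 by omega])
    (h2.imp fun l hl h0 => by simp [h0])
  refine ⟨fun l => b l + b₁ l, hb.imp₂ hb₁ fun l _ h h' => by simp [h, h'],
    hb'.imp₂ hb₁' fun l hl h h' => ?_⟩
  simp only [hl, if_true] at h'
  rw [dL_add]
  linear_combination h + h'

end Loc

/-! ### Change of coefficients -/

lemma dL_mul (a : R) (c : List X → R) (l : List X) : dL (fun m => a * c m) l = a * dL c l :=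
  dL_map (AddMonoidHom.mulLeft a) c l

lemma dL_intCast (c : List X → ℤ) (l : List X) :
    dL (fun m => (c m : R)) l = ((dL c l : ℤ) : R) :=
  dL_map (Int.castAddHom R) c l

section Coeff

variable [MetricSpace X] {k : ℕ} {S : Set X}

theorem RelVan.algebra [CompactSpace X] {K F : Type*} [Field K] [Field F] [Algebra K F]
    (h : RelVan K k S) : RelVan F k S := by
  refine relVan_of_finite fun c hfin hc hS => ?_
  let W : Submodule K F := Submodule.span K (range c)
  have : Module.Finite K W := FiniteDimensional.span_of_finite K hfin
  let B := Module.finBasis K W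
  have hcW : ∀ l, c l ∈ W := fun l => Submodule.subset_span ⟨l, rfl⟩
  let w : List X → W := fun l => ⟨c l, hcW l⟩
  let co : ∀ i, W →+ K := fun i => (B.coord i).toAddMonoidHom
  have hsum : ∀ l, c l = ∑ i, algebraMap K F (co i (w l)) * (B i : F) := fun l => by
    have := congrArg (Subtype.val) (B.sum_repr (w l))
    rw [Submodule.coe_sum] at this
    refine this.symm.trans (Finset.sum_congr rfl fun i _ => ?_)
    rw [Submodule.coe_smul, Algebra.smul_def]
    rfl
  have hw0 : ∀ l, c l = 0 → w l = 0 := fun l hl => Subtype.ext hl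
  have hdw : ∀ l, ((dL w l : W) : F) = dL c l := fun l =>
    (dL_map W.subtype.toAddMonoidHom w l).symm
  choose b hb hb' using fun i => h (fun l => co i (w l))
    (hc.imp fun l _ h0 => by
      rw [dL_map]
      rw [← hdw] at h0
      rw [Subtype.ext (a2 := (0 : W)) h0, map_zero])
    (hS.imp fun l _ h0 => by rw [hw0 l h0, map_zero])
  refine ⟨fun l => ∑ i, algebraMap K F (b i l) * (B i : F),
    LocZ.sum _ fun i _ => (hb i).imp fun l _ h0 => by simp [h0], ?_⟩
  refine (LocZ.sum Finset.univ (c := fun i l => algebraMap K F (co i (w l) - dL (b i) l) * (B i : F))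
    fun i _ => (hb' i).imp fun l _ h0 => by simp [h0]).imp fun l _ h0 => ?_
  rw [dL_sum, hsum l, ← Finset.sum_sub_distrib, ← h0]
  refine Finset.sum_congr rfl fun i _ => ?_
  have := dL_map ((AddMonoidHom.mulRight (B i : F)).comp (algebraMap K F : K →+ F)) (b i) l
  simp only [AddMonoidHom.comp_apply, AddMonoidHom.mulRight_apply, AddMonoidHom.coe_coe] at this
  rw [this, map_sub, sub_mul]

theorem RelVan.zmod {p : ℕ} (hp : p ≠ 0) (h : RelVan ℤ k S) (h' : RelVan ℤ (k + 1) S) :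
    RelVan (ZMod p) k S := by
  intro c hc hS
  have hp' : (p : ℤ) ≠ 0 := by exact_mod_cast hp
  let c₁ : List X → ℤ := fun l => (c l).cast
  have hc₁ : ∀ l, ((c₁ l : ℤ) : ZMod p) = c l := fun l => ZMod.intCast_zmod_cast _
  have hcd : ∀ l, ((dL c₁ l : ℤ) : ZMod p) = dL c l := fun l => by
    rw [← dL_intCast]
    exact dL_congr fun m _ _ => hc₁ m
  have hS₁ : LocZ (k + 1) S c₁ := hS.imp fun l _ h0 => by simp [c₁, h0]
  let e : List X → ℤ := fun l => dL c₁ l / p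
  have he : LocZ (k + 2) univ fun l => p * e l - dL c₁ l := hc.imp fun l _ h0 => by
    rw [← hcd, ZMod.intCast_zmod_eq_zero_iff_dvd] at h0
    simp [e, Int.mul_ediv_cancel' h0]
  obtain ⟨b, hb, hb'⟩ := h' e (he.dL.imp fun l _ h0 => by
      rw [dL_sub, dL_dL, sub_zero, dL_mul] at h0
      exact (mul_eq_zero.1 h0).resolve_left hp')
    (hS₁.dL.imp fun l _ h0 => by simp [e, h0])
  obtain ⟨b', hb₁, hb₁'⟩ := h (fun l => c₁ l - p * b l)
    (he.imp₂ hb' fun l _ h0 h1 => by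
      rw [dL_sub, dL_mul]
      linear_combination -h0 + p * h1)
    (hS₁.imp₂ hb fun l _ h0 h1 => by simp [h0, h1])
  refine ⟨fun l => b' l, hb₁.imp fun l _ h0 => by simp [h0], hb₁'.imp fun l _ h0 => ?_⟩
  rw [dL_intCast, ← hc₁]
  have := congrArg (Int.cast : ℤ → ZMod p) h0
  push_cast at this
  simpa using this

lemma exists_denom {s : Set ℚ} (hs : s.Finite) :
    ∃ N : ℕ, N ≠ 0 ∧ ∀ q ∈ s, ((N * q).num : ℚ) = N * q := by
  refine ⟨∏ q ∈ hs.toFinset, q.den, Finset.prod_ne_zero_iff.2 fun q _ => q.den_nz, fun q hq => ?_⟩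
  obtain ⟨m, hm⟩ := Finset.dvd_prod_of_mem Rat.den (hs.mem_toFinset.2 hq)
  have : ((∏ q ∈ hs.toFinset, q.den : ℕ) : ℚ) * q = ((m * q.num : ℤ) : ℚ) := by
    rw [hm]
    push_cast
    rw [← Rat.mul_den_eq_num q]
    ring
  rw [this, Rat.num_intCast]

theorem RelVan.rat [CompactSpace X] (h : RelVan ℤ k S) : RelVan ℚ k S := by
  refine relVan_of_finite fun c hfin hc hS => ?_
  obtain ⟨N, hN, hNc⟩ := exists_denom hfin
  have hN' : (N : ℚ) ≠ 0 := by exact_mod_cast hN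
  obtain ⟨b, hb, hb'⟩ := h (fun l => (N * c l).num)
    (hc.imp fun l _ h0 => by
      have : ((dL (fun l => (N * c l).num) l : ℤ) : ℚ) = 0 := by
        rw [← dL_intCast, dL_congr (c' := fun l => N * c l) fun m _ _ => hNc _ ⟨m, rfl⟩, dL_mul, h0,
          mul_zero]
      exact_mod_cast this)
    (hS.imp fun l _ h0 => by simp [h0])
  refine ⟨fun l => (N : ℚ)⁻¹ * b l, hb.imp fun l _ h0 => by simp [h0], hb'.imp fun l _ h0 => ?_⟩
  have := congrArg (Int.cast : ℤ → ℚ) h0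
  push_cast at this
  rw [hNc _ ⟨l, rfl⟩] at this
  rw [dL_mul, dL_intCast]
  field_simp
  linear_combination this

lemma exists_of_mul (hp : ∀ p : ℕ, p.Prime → RelVan (ZMod p) (k + 1) S) (N : ℕ) (hN : N ≠ 0) :
    ∀ c b : List X → ℤ, LocZ (k + 2) S b → LocZ (k + 3) univ (fun l => N * c l - dL b l) →
      ∃ b : List X → ℤ, LocZ (k + 2) S b ∧ LocZ (k + 3) univ (fun l => c l - dL b l) := by
  induction N using induction_on_primes with
  | zero => exact absurd rfl hN
  | one => exact fun c b hb hc => ⟨b, hb, hc.imp fun l _ h0 => by simpa using h0⟩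
  | prime_mul p M hpp ih =>
    intro c b hb hc
    have hp' : (p : ℤ) ≠ 0 := by exact_mod_cast hpp.ne_zero
    obtain ⟨e, he, he'⟩ := hp p hpp (fun l => (b l : ZMod p))
      (hc.imp fun l _ h0 => by
        rw [dL_intCast, show dL b l = p * (M * c l) by push_cast at h0; linarith]
        simp)
      (hb.imp fun l _ h0 => by simp [h0])
    let e₁ : List X → ℤ := fun l => (e l).cast
    have hed : ∀ l, ((dL e₁ l : ℤ) : ZMod p) = dL e l := fun l => by
      rw [← dL_intCast]
      exact dL_congr fun m _ _ => ZMod.intCast_zmod_cast _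
    have hdiv : LocZ (k + 2) univ fun l => p * ((b l - dL e₁ l) / p) - (b l - dL e₁ l) :=
      he'.imp fun l _ h0 => by
        rw [← hed, ← Int.cast_sub, ZMod.intCast_zmod_eq_zero_iff_dvd] at h0
        rw [Int.mul_ediv_cancel' h0, sub_self]
    refine ih (fun h => hN (by simp [h])) c (fun l => (b l - dL e₁ l) / p) ?_ ?_
    · exact hb.imp₂ (LocZ.dL (he.imp (c' := e₁) fun l _ h0 => by simp [e₁, h0]))
        fun l _ h0 h1 => by simp [h0, h1]
    · refine hdiv.dL.imp₂ hc fun l _ h0 h1 => ?_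
      rw [dL_sub, dL_sub, dL_dL, dL_mul] at h0
      refine (mul_eq_zero.1 (?_ : (p : ℤ) * _ = 0)).resolve_left hp'
      push_cast at h1
      linear_combination h1 - h0

theorem RelVan.int [CompactSpace X] (hp : ∀ p : ℕ, p.Prime → RelVan (ZMod p) (k + 1) S)
    (h : RelVan ℚ (k + 2) S) : RelVan ℤ (k + 2) S := by
  intro c hc hS
  obtain ⟨b, hb, hb'⟩ := h (fun l => (c l : ℚ)) (hc.imp fun l _ h0 => by rw [dL_intCast, h0]; simp)
    (hS.imp fun l _ h0 => by simp [h0])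
  obtain ⟨ρ, hρ, hr⟩ := exists_homotopy_map hc hS
  obtain ⟨ρ₁, hρ₁, h1⟩ := hb.comp_map
  obtain ⟨ρ₂, hρ₂, h2⟩ := hb'.comp_map
  obtain ⟨r, hfin, hd⟩ := exists_finite_range (X := X) (lt_min hρ (lt_min hρ₁ hρ₂))
  obtain ⟨b₀, hb₀, hb₀'⟩ := hr r fun x => (hd x).trans_le (min_le_left _ _)
  have h1 := h1 r fun x => (hd x).trans_le ((min_le_right _ _).trans (min_le_left _ _))
  have h2 := h2 r fun x => (hd x).trans_le ((min_le_right _ _).trans (min_le_right _ _))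
  obtain ⟨N, hN, hNb⟩ := exists_denom (finite_range_comp_map hfin (k + 2) b)
  have hNb' : ∀ l : List X, l.length = k + 2 →
      ((N * b (l.map r)).num : ℚ) = N * b (l.map r) := fun l hl => by
    simpa [hl] using hNb _ ⟨l, rfl⟩
  obtain ⟨b₁, hb₁, hb₁'⟩ := exists_of_mul hp N hN (fun l => c (l.map r))
    (fun l => (N * b (l.map r)).num) (h1.imp fun l _ h0 => by simp [h0])
    (h2.imp fun l hl h0 => by
      have : ((N * c (l.map r) - dL (fun l => (N * b (l.map r)).num) l : ℤ) : ℚ) = 0 := by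
        push_cast
        rw [← dL_intCast, dL_congr (c' := fun l => N * b (l.map r))
          fun m _ hm => hNb' m (by omega), dL_mul, dL_comp_map]
        linear_combination (N : ℚ) * h0
      exact_mod_cast this)
  refine ⟨fun l => b₀ l + b₁ l, hb₀.imp₂ hb₁ fun l _ h0 h1 => by simp [h0, h1],
    hb₀'.imp₂ hb₁' fun l _ h0 h1 => ?_⟩
  rw [dL_add]
  linear_combination h0 + h1

end Coeff

/-! ### Retraction onto ordered chains on a finite set -/

section Sorted

variable [LinearOrder X]

/-- Signed insertion of a vertex in a sorted list. -/
def ins (R : Type*) [CommRing R] (x : X) : List X → Ch R X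
  | [] => Finsupp.single [x] 1
  | y :: t => if x < y then Finsupp.single (x :: y :: t) 1 else
      if x = y then 0 else -cone y (ins R x t)

/-- Linear extension of `ins`. -/
def insC (x : X) : Ch R X →ₗ[R] Ch R X := Finsupp.linearCombination R (ins R x)

/-- Replaces vertices by their images under `r` and sorts the result. -/
def rl (R : Type*) [CommRing R] (r : X → X) : List X → Ch R X
  | [] => Finsupp.single [] 1
  | x :: l => insC (r x) (rl R r l)

@[simp] lemma insC_single (x : X) (l : List X) :
    insC x (Finsupp.single l (1 : R)) = ins R x l := by
  simp [insC]

/-- Strictly sorted lists of length `k` with entries in `V`. -/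
def Srt (V : Set X) (k : ℕ) : Set (List X) :=
  {m | m.Pairwise (· < ·) ∧ m.length = k ∧ ∀ x ∈ m, x ∈ V}

lemma Srt.finite {V : Set X} (hV : V.Finite) (k : ℕ) : (Srt V k).Finite := by
  have := hV.to_subtype
  refine ((List.finite_length_eq V k).image (List.map Subtype.val)).subset ?_
  rintro l ⟨-, hl, hx⟩
  lift l to List V using hx
  exact ⟨l, by simpa using hl, rfl⟩

lemma Srt.length_le {V : Set X} (hV : V.Finite) {k : ℕ} {m : List X} (hm : m ∈ Srt V k) :
    k ≤ hV.toFinset.card := by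
  have hn : m.Nodup := hm.1.imp fun h => h.ne
  rw [← hm.2.1, ← List.toFinset_card_of_nodup hn]
  exact Finset.card_le_card fun x hx => hV.mem_toFinset.2 (hm.2.2 x (List.mem_toFinset.1 hx))

lemma srt_mono {V V' : Set X} {k : ℕ} {m : List X} (hm : m ∈ Srt V k) (h : V ⊆ V') :
    m ∈ Srt V' k := ⟨hm.1, hm.2.1, fun x hx => h (hm.2.2 x hx)⟩

lemma ins_of_lt {x : X} {m : List X} (h : ∀ y ∈ m, x < y) :
    ins R x m = Finsupp.single (x :: m) 1 := by
  cases m with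
  | nil => rfl
  | cons y t => simp [ins, h y (by simp)]

lemma ins_mem (x : X) {V : Set X} {k : ℕ} {t : List X} (ht : t ∈ Srt V k) :
    ins R x t ∈ Finsupp.supported R R (Srt (insert x V) (k + 1)) := by
  suffices h : ins R x t ∈ Finsupp.supported R R (Srt ({z | z = x ∨ z ∈ t}) (t.length + 1)) by
    rw [ht.2.1] at h
    exact supported_mono' h fun m hm => srt_mono hm fun z hz => hz.imp id (ht.2.2 z)
  have hs := ht.1
  clear ht
  induction t with
  | nil => exact single_mem (by simp [Srt]) _
  | cons y t ih =>
    rw [List.pairwise_cons] at hs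
    unfold ins
    split_ifs with h1 h2
    · refine single_mem (by
        refine ⟨List.pairwise_cons.2 ⟨fun z hz => ?_, List.pairwise_cons.2 hs⟩, rfl, by simp⟩
        rcases List.mem_cons.1 hz with rfl | hz
        · exact h1
        · exact h1.trans (hs.1 z hz)) _
    · exact Submodule.zero_mem _
    · have h3 : y < x := lt_of_le_of_ne (not_lt.1 h1) (Ne.symm h2)
      refine Submodule.neg_mem _ (map_mem (cone y) (fun m hm => ?_) (ih hs.2))
      rw [cone_single]
      refine single_mem (by
        refine ⟨List.pairwise_cons.2 ⟨fun z hz => ?_, hm.1⟩, by simp [hm.2.1], fun z hz => ?_⟩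
        · rcases hm.2.2 z hz with rfl | hz
          · exact h3
          · exact hs.1 z hz
        · rcases List.mem_cons.1 hz with rfl | hz
          · simp
          · rcases hm.2.2 z hz with h | h
            · exact Or.inl h
            · exact Or.inr (List.mem_cons_of_mem _ h)) _

lemma insC_cone_self (x : X) (z : Ch R X) : insC x (cone x z) = 0 :=
  map_eq (s := univ) (insC x ∘ₗ (cone x : Ch R X →ₗ[R] Ch R X)) 0 (fun l _ => by simp [ins]) (by simp)

lemma insC_cone {x y : X} (h : y < x) (z : Ch R X) : insC x (cone y z) = -cone y (insC x z) :=
  map_eq (s := univ) (insC x ∘ₗ (cone y : Ch R X →ₗ[R] Ch R X)) (-((cone y : Ch R X →ₗ[R] Ch R X) ∘ₗ insC x))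
    (fun l _ => by simp [ins, h.not_gt, h.ne']) (by simp)

lemma bd_ins (x : X) {t : List X} (ht : t.Pairwise (· < ·)) :
    bd (ins R x t) = Finsupp.single t 1 - insC x (bdl t) := by
  induction t with
  | nil => simp [ins, bdl]
  | cons y t ih =>
    rw [List.pairwise_cons] at ht
    rcases lt_trichotomy x y with h | rfl | h
    · have hlt : ∀ z ∈ y :: t, x < z := fun z hz => by
        rcases List.mem_cons.1 hz with rfl | hz
        · exact h
        · exact h.trans (ht.1 z hz)
      have : insC x (bdl (y :: t)) = cone x (bdl (y :: t) : Ch R X) :=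
        map_eq _ _ (fun m hm => by
          rw [insC_single, cone_single, ins_of_lt fun z hz => hlt z (hm.1.subset hz)])
          (bdl_mem (y :: t))
      rw [this, ins_of_lt hlt, bd_single]
      rfl
    · simp only [bdl, ins, lt_irrefl, if_false, if_true, map_zero, map_sub, insC_cone_self,
        insC_single, ins_of_lt ht.1, sub_zero, sub_self]
    · simp only [bdl, ins, h.not_gt, h.ne', if_false, map_neg, bd_cone, ih ht.2, map_sub,
        insC_cone h, insC_single, cone_single]
      abel

lemma rl_mem (r : X → X) (l : List X) :
    rl R r l ∈ Finsupp.supported R R (Srt {y | ∃ x ∈ l, y = r x} l.length) := by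
  induction l with
  | nil => exact single_mem (by simp [Srt]) _
  | cons x l ih =>
    refine map_mem (insC (r x)) (fun m hm => ?_) ih
    rw [insC_single]
    refine supported_mono' (ins_mem _ hm) fun m' hm' => srt_mono hm' ?_
    rintro z (rfl | ⟨x', hx', rfl⟩)
    · exact ⟨x, by simp, rfl⟩
    · exact ⟨x', List.mem_cons_of_mem _ hx', rfl⟩

lemma bd_rl (r : X → X) (l : List X) :
    bd (rl R r l) = Finsupp.linearCombination R (rl R r) (bdl l) := by
  induction l with
  | nil => simp [rl, bdl]
  | cons x l ih =>
    have h1 : bd (insC (r x) (rl R r l)) = rl R r l - insC (r x) (bd (rl R r l)) :=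
      map_eq ((bd : Ch R X →ₗ[R] Ch R X) ∘ₗ insC (r x)) (LinearMap.id - insC (r x) ∘ₗ bd)
        (fun m hm => by simp [bd_ins _ hm.1]) (rl_mem r l)
    have h2 : Finsupp.linearCombination R (rl R r) (cone x (bdl l)) =
        insC (r x) (Finsupp.linearCombination R (rl R r) (bdl l)) :=
      map_eq (s := univ) (Finsupp.linearCombination R (rl R r) ∘ₗ cone x)
        (insC (r x) ∘ₗ Finsupp.linearCombination R (rl R r)) (fun m _ => by simp [rl]) (by simp)
    simp only [rl, bdl, h1, ih, map_sub, h2]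
    simp

end Sorted

lemma exists_pos_le {ι : Type*} (s : Finset ι) (δ : ι → ℝ) (h : ∀ i, 0 < δ i) :
    ∃ ε > 0, ∀ i ∈ s, ε ≤ δ i := by
  classical
  induction s using Finset.induction_on with
  | empty => exact ⟨1, one_pos, by simp⟩
  | insert j s _ ih =>
    obtain ⟨ε, hε, h1⟩ := ih
    refine ⟨min ε (δ j), lt_min hε (h j), fun i hi => ?_⟩
    rcases Finset.mem_insert.1 hi with rfl | hi
    · exact min_le_right _ _
    · exact (min_le_left _ _).trans (h1 i hi)

/-! ### Reduction of dimension -/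

/-- The points which are `2ρ`-close to all vertices of `m`. -/
def Nbh [MetricSpace X] (ρ : ℝ) (m : List X) : Set X := {x | ∀ y ∈ m, dist x y < 2 * ρ}

lemma isOpen_Nbh [MetricSpace X] (ρ : ℝ) (m : List X) : IsOpen (Nbh ρ m) := by
  have : Nbh ρ m = ⋂ y ∈ {y | y ∈ m}, Metric.ball y (2 * ρ) := by
    ext x
    simp [Nbh]
  rw [this]
  exact m.finite_toSet.isOpen_biInter fun _ _ => Metric.isOpen_ball

section Reduction

variable [MetricSpace X] [LinearOrder X]

lemma exists_homotopy_down {ρ : ℝ} (hρ : 0 < ρ) {r : X → X} (hfin : (range r).Finite)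
    (hr : ∀ x, dist (r x) x < ρ) {n : ℕ}
    (h : ∀ k > n, ∀ A : Set X, IsClosed A → RelVan R k A) :
    ∃ g : List X → Ch R X, g [] = 0 ∧
      (∀ l, g l ∈ Finsupp.supported R R (Srt (range r) (l.length + 1))) ∧
      (∀ m k, LocZ k (Nbh ρ m)ᶜ fun l => g l m) ∧
      ∀ k > n, LocZ (k + 1) univ fun l =>
        rl R r l - Finsupp.linearCombination R g (bdl l) - bd (g l) := by
  classical
  have hrl : ∀ l : List X, rl R r l ∈ Finsupp.supported R R (Srt (range r) l.length) := fun l =>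
    supported_mono' (rl_mem r l) fun m hm => srt_mono hm (by rintro _ ⟨x, -, rfl⟩; exact ⟨x, rfl⟩)
  refine Nat.decreasingInduction' (m := n) (n := max n hfin.toFinset.card)
    (P := fun j => ∃ g : List X → Ch R X, g [] = 0 ∧
      (∀ l, g l ∈ Finsupp.supported R R (Srt (range r) (l.length + 1))) ∧
      (∀ m k, LocZ k (Nbh ρ m)ᶜ fun l => g l m) ∧
      ∀ k > j, LocZ (k + 1) univ fun l =>
        rl R r l - Finsupp.linearCombination R g (bdl l) - bd (g l)) ?_ (le_max_left _ _) ?_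
  · rintro j - hj ⟨g, hg0, hgs, hgl, hg⟩
    have hrg : ∀ l : List X, l.length = j + 2 → rl R r l - bd (g l) ∈
        Finsupp.supported R R (Srt (range r) (j + 2)) := fun l hl => by
      refine Submodule.sub_mem _ (hl ▸ hrl l) (map_mem bd (fun m hm => ?_) (hgs l))
      rw [bd_single]
      exact supported_mono' (bdl_mem m) fun m' hm' =>
        ⟨hm.1.sublist hm'.1, by have := hm.2.1; have := hm'.2; omega,
          fun x hx => hm.2.2 x (hm'.1.subset hx)⟩
    have key : ∀ m : List X, ∃ b : List X → R, LocZ (j + 1) (Nbh ρ m)ᶜ b ∧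
        LocZ (j + 2) univ fun l => (rl R r l - bd (g l)) m - dL b l := by
      intro m
      refine h (j + 1) (by omega) _ (isOpen_Nbh ρ m).isClosed_compl
        (fun l => (rl R r l - bd (g l)) m) ?_ ?_
      · refine (hg (j + 2) (by omega)).imp fun l _ h0 => ?_
        have h1 : dL (fun l => (rl R r l - bd (g l)) m) l =
            ((Finsupp.linearCombination R (rl R r) (bdl l) -
              bd (Finsupp.linearCombination R g (bdl l))) : Ch R X) m := by
          rw [dL_eq_ev]
          exact map_eq (s := univ) (ev fun l => (rl R r l - bd (g l)) m)
            (Finsupp.lapply m ∘ₗ (Finsupp.linearCombination R (rl R r) -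
              bd ∘ₗ Finsupp.linearCombination R g)) (fun l _ => by simp) (by simp)
        have h2 := congrArg bd h0
        rw [map_sub, map_sub, bd_bd, bd_rl, sub_zero, map_zero] at h2
        rw [h1, h2]
        rfl
      · have h1 : LocZ (j + 2) (Nbh ρ m)ᶜ fun l => rl R r l m := by
          refine ⟨ρ / 2, by positivity, fun l _ hs ⟨x, hx, a, ha, hd⟩ => ?_⟩
          by_contra hne
          have hm := (Finsupp.mem_supported R _).1 (rl_mem r l) (Finsupp.mem_support_iff.2 hne)
          refine ha fun y hy => ?_
          obtain ⟨x', hx', rfl⟩ := hm.2.2 y hy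
          have h3 := dist_triangle4 a x x' (r x')
          have h4 := hs x hx x' hx'
          have h5 := hr x'
          rw [dist_comm] at hd h5
          linarith
        have h2 : LocZ (j + 2) (Nbh ρ m)ᶜ fun l => bd (g l) m := by
          refine (LocZ.sum (Srt.finite hfin (j + 3)).toFinset
            (c := fun m' l => g l m' * (bdl m' : Ch R X) m) fun m' _ => ?_).imp fun l hl h0 => ?_
          · by_cases hm : (bdl m' : Ch R X) m = 0
            · simpa [hm] using LocZ.zero
            · have := (Finsupp.mem_supported R _).1 (bdl_mem (R := R) m')
                (Finsupp.mem_support_iff.2 hm)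
              refine ((hgl m' (j + 2)).mono (compl_subset_compl.2 fun x hx y hy =>
                hx y (this.1.subset hy))).imp fun l _ h0 => by simp [h0]
          · rw [← h0, bd, Finsupp.linearCombination_apply, Finsupp.sum_of_support_subset
              (s := (Srt.finite hfin (j + 3)).toFinset) _ _ _ (by simp)]
            · simp [Finsupp.finsetSum_apply]
            · have := (Finsupp.mem_supported R _).1 (hgs l)
              rw [hl] at this
              intro m' hm'
              simpa using this hm'
        exact h1.imp₂ h2 fun l _ h1 h2 => by simp [h1, h2]
    choose b hb hb' using key
    set B := (Srt.finite hfin (j + 2)).toFinset with hB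
    let g' : List X → Ch R X := fun l =>
      if l.length = j + 1 then ∑ m ∈ B, Finsupp.single m (b m l) else g l
    have hg' : ∀ l : List X, l.length ≠ j + 1 → g' l = g l := fun l hl => by simp [g', hl]
    refine ⟨g', by rw [hg' _ (by simp), hg0], fun l => ?_, fun m k => ?_, fun k hk => ?_⟩
    · by_cases hl : l.length = j + 1
      · simp only [g', hl, if_true]
        exact Submodule.sum_mem _ fun m hm => single_mem (by simpa [hB] using hm) _
      · rw [hg' l hl]
        exact hgs l
    · by_cases hk : k = j + 1
      · subst hk
        refine (hb m).imp fun l hl h0 => ?_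
        simp only [g', hl, if_true, Finsupp.finsetSum_apply]
        refine Finset.sum_eq_zero fun m' _ => ?_
        rw [Finsupp.single_apply]
        split_ifs with hm
        · rw [hm, h0]
        · rfl
      · exact (hgl m k).imp fun l hl h0 => by rw [hg' l (by omega), h0]
    · rcases Nat.lt_or_ge (j + 1) k with hk | hk
      · refine (hg k hk).imp fun l hl h0 => ?_
        rw [← h0, hg' l (by omega)]
        congr 2
        exact map_eq _ _ (fun m hm => by
          have := hm.2
          simp [hg' m (by omega)]) (bdl_mem l)
      · obtain rfl : k = j + 1 := by omega
        refine (LocZ.sum B (c := fun m l => Finsupp.single m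
          ((rl R r l - bd (g l)) m - dL (b m) l)) fun m _ => (hb' m).imp fun l _ h0 => by
            rw [h0, Finsupp.single_zero]).imp fun l hl h0 => ?_
        have h1 : Finsupp.linearCombination R g' (bdl l) =
            ∑ m ∈ B, Finsupp.single m (dL (b m) l) := by
          have : Finsupp.linearCombination R g' (bdl l) =
              (∑ m ∈ B, Finsupp.lsingle m ∘ₗ ev (b m)) (bdl l) :=
            map_eq _ _ (fun m hm => by
              have := hm.2
              simp [g', show m.length = j + 1 by omega]) (bdl_mem l)
          rw [this]
          simp [LinearMap.sum_apply, dL_eq_ev]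
        have h2 : rl R r l - bd (g l) =
            ∑ m ∈ B, Finsupp.single m ((rl R r l - bd (g l)) m) := by
          have hsub := (Finsupp.mem_supported R _).1 (hrg l hl)
          conv_lhs => rw [← Finsupp.sum_single (rl R r l - bd (g l))]
          exact Finsupp.sum_of_support_subset _ (fun m hm => by simpa [hB] using hsub hm) _
            (by simp)
        simp only [Finsupp.single_sub, Finset.sum_sub_distrib] at h0
        rw [hg' l (by omega), h1, sub_right_comm, h2]
        simpa [Finset.sum_sub_distrib] using h0
  · refine ⟨fun _ => 0, rfl, by simp, fun m k => LocZ.zero, fun k hk => ?_⟩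
    refine ⟨1, one_pos, fun l hl _ _ => ?_⟩
    have : rl R r l = 0 := by
      have := supported_mono' (t := ∅) (hrl l) fun m hm => by
        have := Srt.length_le hfin hm
        have := le_max_right n hfin.toFinset.card
        omega
      simpa using this
    have h2 : Finsupp.linearCombination R (fun _ : List X => (0 : Ch R X)) (bdl l) = 0 :=
      map_eq (s := univ) _ (0 : Ch R X →ₗ[R] Ch R X) (by simp) (by simp)
    simp [this, h2]

end Reduction

/-- If the relative cohomology of `X` vanishes above degree `n`, there is a chain map close to the
identity which kills all small simplices of dimension greater than `n`. -/
theorem exists_reduction [MetricSpace X] [CompactSpace X] {n : ℕ}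
    (h : ∀ k > n, ∀ A : Set X, IsClosed A → RelVan R k A) {ρ : ℝ} (hρ : 0 < ρ) :
    ∃ T : Ch R X →ₗ[R] Ch R X, (∀ z, bd (T z) = T (bd z)) ∧
      T (Finsupp.single [] 1) = Finsupp.single [] 1 ∧
      (∀ l, T (Finsupp.single l 1) ∈ Lst R l.length univ) ∧
      ∃ δ > 0, ∀ l, Sml δ l → l ≠ [] →
        T (Finsupp.single l 1) ∈ Lst R l.length {q | ∃ x ∈ l, dist q x < ρ} ∧
        (n + 1 < l.length → T (Finsupp.single l 1) = 0) := by
  classical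
  let _ : LinearOrder X := IsWellOrder.linearOrder WellOrderingRel
  obtain ⟨r, hfin, hr⟩ := exists_finite_range (X := X) (half_pos hρ)
  obtain ⟨g, hg0, hgs, hgl, hg⟩ := exists_homotopy_down (half_pos hρ) hfin hr h
  set N := hfin.toFinset.card
  have hlen : ∀ {l : List X} {k : ℕ}, k = l.length → ∀ {z : Ch R X},
      z ∈ Finsupp.supported R R (Srt (range r) k) → z ∈ Lst R l.length univ := fun hk _ hz =>
    supported_mono' hz fun m hm => ⟨hm.2.1.trans hk, fun _ _ => trivial⟩
  have hrl : ∀ l : List X, rl R r l ∈ Finsupp.supported R R (Srt (range r) l.length) := fun l =>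
    supported_mono' (rl_mem r l) fun m hm => srt_mono hm (by rintro _ ⟨x, -, rfl⟩; exact ⟨x, rfl⟩)
  let T : Ch R X →ₗ[R] Ch R X := Finsupp.linearCombination R (rl R r) -
    Finsupp.linearCombination R g ∘ₗ bd - bd ∘ₗ Finsupp.linearCombination R g
  have hT : ∀ l, T (Finsupp.single l 1) =
      rl R r l - Finsupp.linearCombination R g (bdl l) - bd (g l) := fun l => by simp [T]
  have hbd : ∀ z : Ch R X, bd (Finsupp.linearCombination R (rl R r) z) =
      Finsupp.linearCombination R (rl R r) (bd z) := fun z =>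
    map_eq (s := univ) (bd ∘ₗ Finsupp.linearCombination R (rl R r))
      (Finsupp.linearCombination R (rl R r) ∘ₗ bd) (fun l _ => by simp [bd_rl]) (by simp)
  have hTuniv : ∀ l, T (Finsupp.single l 1) ∈ Lst R l.length univ := fun l => by
    rw [hT]
    refine Submodule.sub_mem _ (Submodule.sub_mem _ (hlen rfl (hrl l)) ?_) ?_
    · refine map_mem _ (fun m hm => ?_) (bdl_mem l)
      rw [Finsupp.linearCombination_single, one_smul]
      exact hlen hm.2 (hgs m)
    · exact bd_mem_Lst (supported_mono' (hgs l) fun m hm => ⟨hm.2.1, fun _ _ => trivial⟩)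
  -- a scale which is good for all the finitely many relevant lengths
  have hk : ∀ k : ℕ, ∃ δ > 0, ∀ l : List X, l.length = k → Sml δ l → l ≠ [] →
      (∀ m, g l m ≠ 0 → ∀ x ∈ l, x ∈ Nbh (ρ / 2) m) ∧
      (n + 1 < l.length → T (Finsupp.single l 1) = 0) := fun k => by
    obtain ⟨δ, hδ, h1⟩ := LocZ.all (Srt.finite hfin (k + 1)).toFinset
      (k := k) (S := univ) (c := fun m l => if ∀ x ∈ l, x ∈ Nbh (ρ / 2) m then 0 else g l m)
      (fun m _ => by
        obtain ⟨δ, hδ, h2⟩ := hgl m k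
        refine ⟨δ, hδ, fun l hl hs _ => ?_⟩
        dsimp only
        split_ifs with h3
        · rfl
        · push Not at h3
          obtain ⟨x, hx, hxm⟩ := h3
          exact h2 l hl hs ⟨x, hx, x, hxm, by simpa using hδ⟩)
    obtain ⟨δ', hδ', h2⟩ : ∃ δ > 0, ∀ l : List X, l.length = k → Sml δ l → l ≠ [] →
        (n + 1 < l.length → T (Finsupp.single l 1) = 0) := by
      by_cases hkn : n + 1 < k
      · obtain ⟨k, rfl⟩ : ∃ j, k = j + 1 := ⟨k - 1, by omega⟩
        obtain ⟨δ, hδ, h2⟩ := LocZ.univ_iff.1 (hg k (by omega))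
        exact ⟨δ, hδ, fun l hl hs _ _ => (hT l).trans (h2 l hl hs)⟩
      · exact ⟨1, one_pos, fun l hl _ _ hn => absurd hn (by omega)⟩
    refine ⟨min δ δ', lt_min hδ hδ', fun l hl hs hne => ⟨fun m hm => ?_,
      h2 l hl (hs.mono (min_le_right _ _)) hne⟩⟩
    obtain ⟨x, hx⟩ := List.exists_mem_of_ne_nil l hne
    have hmem := (Finsupp.mem_supported R _).1 (hgs l) (Finsupp.mem_support_iff.2 hm)
    rw [hl] at hmem
    have := h1 m (by simpa using hmem) l hl (hs.mono (min_le_left _ _))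
      ⟨x, hx, x, trivial, by simpa using hδ⟩
    by_contra hcon
    rw [if_neg hcon] at this
    exact hm this
  choose δ hδ hδ' using hk
  obtain ⟨ε, hε, hεδ⟩ := exists_pos_le (Finset.range (N + 1)) δ hδ
  have hgN : ∀ l : List X, N ≤ l.length → g l = 0 := fun l hl => by
    have := supported_mono' (t := ∅) (hgs l) fun m hm => by
      have := Srt.length_le hfin hm
      omega
    simpa using this
  have hrN : ∀ l : List X, N < l.length → rl R r l = 0 := fun l hl => by
    have := supported_mono' (t := ∅) (hrl l) fun m hm => by
      have := Srt.length_le hfin hm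
      omega
    simpa using this
  have hgood : ∀ l : List X, Sml ε l →
      g l ∈ Lst R (l.length + 1) {q | ∃ x ∈ l, dist q x < ρ} := fun l hs => by
    rcases eq_or_ne l [] with rfl | hne
    · rw [hg0]
      exact Submodule.zero_mem _
    by_cases hl : l.length < N + 1
    · have h1 := (hδ' _ l rfl (hs.mono (hεδ _ (Finset.mem_range.2 hl))) hne).1
      obtain ⟨x, hx⟩ := List.exists_mem_of_ne_nil l hne
      rw [Lst, Finsupp.mem_supported]
      intro m hm
      refine ⟨((Finsupp.mem_supported R _).1 (hgs l) hm).2.1, fun y hy => ⟨x, hx, ?_⟩⟩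
      have := h1 m (Finsupp.mem_support_iff.1 hm) x hx y hy
      rw [dist_comm]
      linarith
    · rw [hgN l (by omega)]
      exact Submodule.zero_mem _
  refine ⟨T, fun z => by simp [T, hbd, bd_bd], by simp [hT, rl, bdl, hg0], hTuniv, ε, hε,
    fun l hs hne => ⟨?_, fun hn => ?_⟩⟩
  · rw [hT]
    refine Submodule.sub_mem _ (Submodule.sub_mem _ ?_ ?_) (bd_mem_Lst (hgood l hs))
    · refine supported_mono' (rl_mem r l) fun m hm => ⟨hm.2.1, fun y hy => ?_⟩
      obtain ⟨x, hx, rfl⟩ := hm.2.2 y hy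
      exact ⟨x, hx, (hr x).trans (by linarith)⟩
    · refine map_mem _ (fun m hm => ?_) (bdl_mem l)
      rw [Finsupp.linearCombination_single, one_smul, ← hm.2]
      exact Lst_mono (by rintro q ⟨x, hx, hd⟩; exact ⟨x, hm.1.subset hx, hd⟩)
        (hgood m (hs.sub hm.1.subset))
  · by_cases hl : l.length < N + 1
    · exact (hδ' _ l rfl (hs.mono (hεδ _ (Finset.mem_range.2 hl))) hne).2 hn
    · have h2 : Finsupp.linearCombination R g (bdl l) = 0 :=
        map_eq _ (0 : Ch R X →ₗ[R] Ch R X) (fun m hm => by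
          have := hm.2
          simp [hgN m (by omega)]) (bdl_mem l)
      rw [hT, hrN l (by omega), h2, hgN l (by omega)]
      simp

/-! ### The tensor product of two list complexes -/

section Tensor

variable (R) in
/-- Chains on pairs of lists. Pairs of nonempty lists span the tensor product of the two
non-augmented complexes; `([], [])` carries the augmentation. -/
abbrev Dc (X Y : Type*) := (List X × List Y) →₀ R

/-- The tensor product of two chains. -/
def tens : Ch R X →ₗ[R] Ch R Y →ₗ[R] Dc R X Y :=
  Finsupp.linearCombination R fun a => Finsupp.lmapDomain R R (Prod.mk a)

@[simp] lemma tens_single (a : List X) (b : List Y) :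
    tens (Finsupp.single a (1 : R)) (Finsupp.single b 1) = Finsupp.single (a, b) 1 := by
  simp [tens]

lemma tens_mem {s : Set (List X)} {t : Set (List Y)} {z : Ch R X} {w : Ch R Y}
    (hz : z ∈ Finsupp.supported R R s) (hw : w ∈ Finsupp.supported R R t) :
    tens z w ∈ Finsupp.supported R R (s ×ˢ t) :=
  map_mem (tens.flip w) (fun a ha => map_mem (tens (Finsupp.single a 1)) (fun b hb => by
    rw [tens_single]
    exact single_mem (by exact ⟨ha, hb⟩) _) hw) hz

/-- Two bilinear maps agreeing on basis elements agree. -/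
lemma bilin_eq {E : Type*} [AddCommGroup E] [Module R E] (f g : Ch R X →ₗ[R] Ch R Y →ₗ[R] E)
    {s : Set (List X)} {t : Set (List Y)} (h : ∀ a ∈ s, ∀ b ∈ t,
      f (Finsupp.single a 1) (Finsupp.single b 1) = g (Finsupp.single a 1) (Finsupp.single b 1))
    {z : Ch R X} {w : Ch R Y} (hz : z ∈ Finsupp.supported R R s)
    (hw : w ∈ Finsupp.supported R R t) : f z w = g z w :=
  map_eq (f.flip w) (g.flip w)
    (fun a ha => map_eq (f (Finsupp.single a 1)) (g (Finsupp.single a 1)) (h a ha) hw) hz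

/-- The augmentation, as a functional on lists of length one. -/
def aug : Ch R X →ₗ[R] R := ev fun l => if l.length = 1 then 1 else 0

/-- The degree involution. -/
def sgn : Ch R X →ₗ[R] Ch R X :=
  Finsupp.linearCombination R fun l => Finsupp.single l ((-1) ^ (l.length + 1))

/-- The boundary operator of the non-augmented complex. -/
def bp : Ch R X →ₗ[R] Ch R X := bd - aug.smulRight (Finsupp.single [] 1)

lemma bp_apply (z : Ch R X) : bp z = bd z - aug z • Finsupp.single [] 1 := rfl

lemma aug_single (l : List X) :
    aug (Finsupp.single l (1 : R)) = if l.length = 1 then 1 else 0 := by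
  simp [aug]

lemma sgn_single (l : List X) :
    sgn (Finsupp.single l (1 : R)) = (-1 : R) ^ (l.length + 1) • Finsupp.single l 1 := by
  simp [sgn]

lemma aug_of_mem {k : ℕ} (hk : k ≠ 1) {s : Set (List X)} (hs : ∀ l ∈ s, l.length = k) {z : Ch R X}
    (hz : z ∈ Finsupp.supported R R s) : aug z = 0 :=
  map_eq aug 0 (fun l hl => by simp [aug_single, hs l hl, hk]) hz

lemma bd_of_mem_one {z : Ch R X} (hz : z ∈ Lst R 1 univ) : bd z = aug z • Finsupp.single [] 1 :=
  map_eq bd (aug.smulRight (Finsupp.single [] 1)) (fun l hl => by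
    obtain ⟨x, rfl⟩ := List.length_eq_one_iff.1 hl.1
    simp [aug_single, bdl]) hz

lemma sgn_of_mem {k : ℕ} {s : Set (List X)} (hs : ∀ l ∈ s, l.length = k) {z : Ch R X}
    (hz : z ∈ Finsupp.supported R R s) : sgn z = (-1 : R) ^ (k + 1) • z :=
  map_eq sgn ((-1 : R) ^ (k + 1) • LinearMap.id) (fun l hl => by simp [sgn_single, hs l hl]) hz

lemma aug_bd (z : Ch R X) : aug (bd z) = 0 := by
  refine map_eq (s := univ) ((aug : Ch R X →ₗ[R] R) ∘ₗ (bd : Ch R X →ₗ[R] Ch R X)) 0 (fun l _ => ?_) (by simp)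
  rw [LinearMap.comp_apply, bd_single, LinearMap.zero_apply]
  by_cases hl : l.length = 2
  · obtain ⟨x, y, rfl⟩ := List.length_eq_two.1 hl
    simp [bdl, aug_single]
  · exact aug_of_mem (k := l.length - 1) (s := {m | m.Sublist l ∧ m.length + 1 = l.length})
      (by omega) (fun m hm => by have := hm.2; omega) (bdl_mem l)

lemma aug_nil : aug (Finsupp.single ([] : List X) (1 : R)) = 0 := by simp [aug_single]

lemma bd_nil : bd (Finsupp.single ([] : List X) (1 : R)) = 0 := by simp [bdl]

lemma aug_bp (z : Ch R X) : aug (bp z) = 0 := by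
  rw [bp_apply, map_sub, map_smul, aug_bd, aug_nil, smul_zero, sub_zero]

lemma bp_bp (z : Ch R X) : bp (bp z) = 0 := by
  rw [bp_apply (bp z), aug_bp, bp_apply, map_sub, map_smul, bd_bd, bd_nil]
  simp

lemma aug_sgn (z : Ch R X) : aug (sgn z) = aug z :=
  map_eq (s := univ) ((aug : Ch R X →ₗ[R] R) ∘ₗ (sgn : Ch R X →ₗ[R] Ch R X)) aug (fun l _ => by
    rw [LinearMap.comp_apply, sgn_single, map_smul, aug_single]
    by_cases hl : l.length = 1 <;> simp [hl]) (by simp)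

lemma sgn_bp (z : Ch R X) : sgn (bp z) = -bp (sgn z) := by
  refine map_eq (s := univ) ((sgn : Ch R X →ₗ[R] Ch R X) ∘ₗ bp) (-((bp : Ch R X →ₗ[R] Ch R X) ∘ₗ sgn)) (fun l _ => ?_)
    (by simp)
  simp only [LinearMap.comp_apply, LinearMap.neg_apply, bp_apply, map_sub, map_smul,
    sgn_single, bd_single]
  rw [sgn_of_mem (s := {m | m.Sublist l ∧ m.length + 1 = l.length}) (k := l.length - 1)
    (fun m hm => by have := hm.2; omega) (bdl_mem l)]
  rcases l with _ | ⟨x, l⟩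
  · simp [bdl, aug_nil]
  · by_cases hl : l = []
    · subst hl
      simp [aug_single, bdl]
    · have : l.length ≠ 0 := by simpa using hl
      simp [aug_single, this, pow_succ]

/-- The boundary on pairs of lists. -/
def bdD : Dc R X Y →ₗ[R] Dc R X Y := Finsupp.linearCombination R fun p =>
  tens (bp (Finsupp.single p.1 1)) (Finsupp.single p.2 1) +
    tens (sgn (Finsupp.single p.1 1)) (bp (Finsupp.single p.2 1)) +
    (aug (Finsupp.single p.1 (1 : R)) * aug (Finsupp.single p.2 (1 : R))) •
      Finsupp.single ([], []) 1

lemma bdD_tens (z : Ch R X) (w : Ch R Y) : bdD (tens z w) =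
    tens (bp z) w + tens (sgn z) (bp w) + (aug z * aug w) • Finsupp.single ([], []) 1 := by
  refine bilin_eq (s := univ) (t := univ) (tens.compr₂ bdD)
    (tens.comp bp + tens.compl₁₂ sgn bp +
      ((LinearMap.mul R R).compl₁₂ aug aug).compr₂
        ((LinearMap.id (R := R) (M := R)).smulRight (Finsupp.single ([], []) 1)))
    (fun a _ b _ => ?_) (by simp) (by simp)
  simp [bdD]

lemma bdD_bdD (z : Dc R X Y) : bdD (bdD z) = 0 := by
  have h0 : bdD (Finsupp.single (([] : List X), ([] : List Y)) (1 : R)) = 0 := by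
    rw [← tens_single, bdD_tens]
    simp [bp_apply, bdl, aug_nil]
  refine map_eq (s := univ) ((bdD : Dc R X Y →ₗ[R] Dc R X Y) ∘ₗ bdD) 0 (fun p _ => ?_) (by simp)
  obtain ⟨a, b⟩ := p
  rw [LinearMap.comp_apply, ← tens_single, bdD_tens, map_add, map_add, bdD_tens, bdD_tens,
    map_smul, h0, bp_bp, bp_bp, sgn_bp, aug_bp, aug_bp]
  simp

/-- Pairs of lists belonging to the augmented tensor product complex. -/
def good (p : List X × List Y) : Prop := p.1 = [] ↔ p.2 = []

/-- The degree of a pair of lists. -/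
def degD (p : List X × List Y) : ℕ := p.1.length + p.2.length - 1

/-- Chains of degree `k` on pairs of lists with entries in `Q` and `Q'`. -/
def SupD (R : Type*) [CommRing R] {X Y : Type*} (k : ℕ) (Q : Set X) (Q' : Set Y) :
    Submodule R (Dc R X Y) :=
  Finsupp.supported R R {p | good p ∧ degD p = k ∧ (∀ x ∈ p.1, x ∈ Q) ∧ ∀ y ∈ p.2, y ∈ Q'}

lemma SupD_mono {k : ℕ} {Q Q₁ : Set X} {Q' Q₁' : Set Y} (h : Q ⊆ Q₁) (h' : Q' ⊆ Q₁') :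
    SupD R k Q Q' ≤ SupD R k Q₁ Q₁' :=
  Finsupp.supported_mono fun _ hp =>
    ⟨hp.1, hp.2.1, fun x hx => h (hp.2.2.1 x hx), fun y hy => h' (hp.2.2.2 y hy)⟩

lemma bp_mem (a : List X) : bp (Finsupp.single a (1 : R)) ∈
    Finsupp.supported R R {m : List X | m.Sublist a ∧ m.length + 1 = a.length ∧ m ≠ []} := by
  rcases a with _ | ⟨x, a⟩
  · simp [bp_apply, bdl, aug_nil]
  by_cases ha : a = []
  · subst ha
    simp [bp_apply, bdl, aug_single]
  · have h1 : aug (Finsupp.single (x :: a) (1 : R)) = 0 := by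
      have : a.length ≠ 0 := by simpa using ha
      simp [aug_single, this]
    rw [bp_apply, h1, zero_smul, sub_zero, bd_single]
    refine supported_mono' (bdl_mem _) fun m hm => ⟨hm.1, hm.2, ?_⟩
    rintro rfl
    have := hm.2
    simp at this
    exact ha this

lemma sgn_mem {s : Set (List X)} {z : Ch R X} (hz : z ∈ Finsupp.supported R R s) :
    sgn z ∈ Finsupp.supported R R s :=
  map_mem sgn (fun l hl => by
    rw [sgn_single]
    exact Submodule.smul_mem _ _ (single_mem hl _)) hz

lemma bdD_single_mem {p : List X × List Y} (hp : good p) :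
    bdD (Finsupp.single p (1 : R)) ∈ Finsupp.supported R R {q : List X × List Y | good q ∧
      degD q + 1 = degD p ∧ q.1 ⊆ p.1 ∧ q.2 ⊆ p.2} := by
  obtain ⟨a, b⟩ := p
  simp only [good] at hp
  rw [← tens_single, bdD_tens]
  refine Submodule.add_mem _ (Submodule.add_mem _ ?_ ?_) ?_
  · refine supported_mono' (tens_mem (bp_mem a) (single_mem (mem_singleton b) 1)) ?_
    rintro ⟨m, _⟩ ⟨⟨h1, h2, h3⟩, rfl⟩
    have ha : a ≠ [] := by rintro rfl; simp at h2
    have hb := mt hp.2 ha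
    change m ≠ [] at h3
    have := List.length_pos_iff.2 h3
    have := List.length_pos_iff.2 hb
    have := List.length_pos_iff.2 ha
    simp only at h2
    exact ⟨by simp [good, h3, hb], by dsimp only [degD]; omega, h1.subset, List.Subset.refl _⟩
  · refine supported_mono' (tens_mem (sgn_mem (single_mem (mem_singleton a) 1)) (bp_mem b)) ?_
    rintro ⟨_, m⟩ ⟨rfl, h1, h2, h3⟩
    have hb : b ≠ [] := by rintro rfl; simp at h2
    have ha := mt hp.1 hb
    change m ≠ [] at h3
    have := List.length_pos_iff.2 h3
    have := List.length_pos_iff.2 hb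
    have := List.length_pos_iff.2 ha
    simp only at h2
    exact ⟨by simp [good, h3, ha], by dsimp only [degD]; omega, List.Subset.refl _, h1.subset⟩
  · rw [aug_single, aug_single]
    split_ifs with h1 h2
    · exact Submodule.smul_mem _ _ (single_mem (by simp [good, degD, h1, h2]) _)
    all_goals simp

lemma bp_cons {x : X} {a : List X} (ha : a ≠ []) : bp (Finsupp.single (x :: a) (1 : R)) =
    Finsupp.single a 1 - cone x (bp (Finsupp.single a 1)) -
      aug (Finsupp.single a (1 : R)) • Finsupp.single [x] 1 := by
  have h1 : aug (Finsupp.single (x :: a) (1 : R)) = 0 := by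
    have : a.length ≠ 0 := by simpa using ha
    simp [aug_single, this]
  rw [bp_apply, h1, bp_apply]
  simp only [bd_single, bdl, map_sub, map_smul, cone_single, zero_smul, sub_zero]
  abel

/-- The contracting homotopy of the cone with apex `(x, y)`. -/
def contr (x : X) (y : Y) : Dc R X Y →ₗ[R] Dc R X Y := Finsupp.linearCombination R fun p =>
  if p.1 = [] then Finsupp.single ([x], [y]) 1 else
    tens (cone x (Finsupp.single p.1 1)) (Finsupp.single p.2 1) +
      aug (Finsupp.single p.1 (1 : R)) •
        tens (Finsupp.single [x] 1) (cone y (Finsupp.single p.2 1))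

lemma contr_tens (x : X) (y : Y) {z : Ch R X} (hz : z ∈ Finsupp.supported R R {l : List X | l ≠ []})
    (w : Ch R Y) : contr x y (tens z w) =
      tens (cone x z) w + aug z • tens (Finsupp.single [x] 1) (cone y w) := by
  refine bilin_eq (t := univ) (tens.compr₂ (contr x y))
    (tens.comp (cone x) + (aug.smulRight ((tens (Finsupp.single [x] (1 : R))).comp (cone y))))
    (fun a ha b _ => ?_) hz (by simp)
  have ha : a ≠ [] := ha
  simp [contr, ha]

lemma contr_spec (x : X) (y : Y) {p : List X × List Y} (hp : good p) :
    bdD (contr x y (Finsupp.single p 1)) + contr x y (bdD (Finsupp.single p 1)) =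
      Finsupp.single p (1 : R) := by
  obtain ⟨a, b⟩ := p
  simp only [good] at hp
  have hx : bp (Finsupp.single [x] (1 : R)) = 0 := by simp [bp_apply, bdl, aug_single]
  have hx' : aug (Finsupp.single [x] (1 : R)) = 1 := by simp [aug_single]
  have hy : bp (Finsupp.single [y] (1 : R)) = 0 := by simp [bp_apply, bdl, aug_single]
  have hy' : aug (Finsupp.single [y] (1 : R)) = 1 := by simp [aug_single]
  have h00 : contr x y (Finsupp.single ([], []) (1 : R)) = Finsupp.single ([x], [y]) 1 := by
    simp [contr]
  by_cases ha : a = []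
  · have hb := hp.1 ha
    subst ha hb
    rw [h00, ← tens_single [x] [y], ← tens_single [] [], bdD_tens, bdD_tens, hx, hy, hx', hy']
    simp [bp_apply, bdl, aug_nil]
  have hb := mt hp.2 ha
  have la : a.length ≠ 0 := by simpa using ha
  have lb : b.length ≠ 0 := by simpa using hb
  have hza : Finsupp.single a (1 : R) ∈ Finsupp.supported R R {l : List X | l ≠ []} :=
    single_mem (by exact ha) _
  have hxa : aug (Finsupp.single (x :: a) (1 : R)) = 0 := by simp [aug_single, la]
  have hyb : aug (Finsupp.single (y :: b) (1 : R)) = 0 := by simp [aug_single, lb]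
  have hsx : sgn (Finsupp.single (x :: a) (1 : R)) = -cone x (sgn (Finsupp.single a 1)) := by
    simp [sgn_single, pow_succ]
  have hs1 : sgn (Finsupp.single [x] (1 : R)) = Finsupp.single [x] 1 := by simp [sgn_single]
  have e1 : bdD (contr x y (Finsupp.single (a, b) (1 : R))) =
      tens (Finsupp.single a 1) (Finsupp.single b 1) -
        tens (cone x (bp (Finsupp.single a 1))) (Finsupp.single b 1) -
        aug (Finsupp.single a (1 : R)) • tens (Finsupp.single [x] 1) (Finsupp.single b 1) -
        tens (cone x (sgn (Finsupp.single a 1))) (bp (Finsupp.single b 1)) +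
        aug (Finsupp.single a (1 : R)) • (tens (Finsupp.single [x] 1) (Finsupp.single b 1) -
          tens (Finsupp.single [x] 1) (cone y (bp (Finsupp.single b 1))) -
          aug (Finsupp.single b (1 : R)) • tens (Finsupp.single [x] 1) (Finsupp.single [y] 1)) := by
    rw [← tens_single a b, contr_tens x y hza, cone_single, cone_single, map_add, map_smul,
      bdD_tens, bdD_tens, hxa, hyb, hsx, hs1, hx, bp_cons ha, bp_cons hb, zero_mul, mul_zero,
      zero_smul, add_zero, add_zero, LinearMap.map_zero, LinearMap.zero_apply, zero_add, map_sub,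
      map_sub, map_smul, LinearMap.sub_apply, LinearMap.sub_apply, LinearMap.smul_apply, map_neg,
      LinearMap.neg_apply, map_sub, map_sub, map_smul, ← sub_eq_add_neg]
  have e2 : contr x y (bdD (Finsupp.single (a, b) (1 : R))) =
      tens (cone x (bp (Finsupp.single a 1))) (Finsupp.single b 1) +
        (tens (cone x (sgn (Finsupp.single a 1))) (bp (Finsupp.single b 1)) +
        aug (Finsupp.single a (1 : R)) • tens (Finsupp.single [x] 1)
          (cone y (bp (Finsupp.single b 1)))) +
        (aug (Finsupp.single a (1 : R)) * aug (Finsupp.single b (1 : R))) •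
          tens (Finsupp.single [x] 1) (Finsupp.single [y] 1) := by
    rw [← tens_single a b, bdD_tens, map_add, map_add, map_smul,
      contr_tens x y (supported_mono' (bp_mem a) fun m hm => hm.2.2),
      contr_tens x y (sgn_mem hza), h00, aug_bp, aug_sgn, zero_smul, add_zero, tens_single [x] [y]]
  rw [e1, e2, tens_single a b, smul_sub, smul_sub, smul_smul]
  abel

lemma SupD_exact {k : ℕ} {Q : Set X} {Q' : Set Y} (hQ : Q.Nonempty) (hQ' : Q'.Nonempty)
    {z : Dc R X Y} (hz : z ∈ SupD R k Q Q') (hb : bdD z = 0) :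
    ∃ w ∈ SupD R (k + 1) Q Q', bdD w = z := by
  obtain ⟨x, hx⟩ := hQ
  obtain ⟨y, hy⟩ := hQ'
  refine ⟨contr x y z, ?_, ?_⟩
  · refine map_mem (contr x y) (fun p hp => ?_) hz
    obtain ⟨a, b⟩ := p
    have hg : a = [] ↔ b = [] := hp.1
    have hd : a.length + b.length - 1 = k := hp.2.1
    have hpa : ∀ x ∈ a, x ∈ Q := hp.2.2.1
    have hpb : ∀ x ∈ b, x ∈ Q' := hp.2.2.2
    by_cases ha : a = []
    · have hb := hg.1 ha
      subst ha hb
      have : contr x y (Finsupp.single ([], []) (1 : R)) = Finsupp.single ([x], [y]) 1 := by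
        simp [contr]
      rw [this]
      refine single_mem (by
        refine ⟨by simp [good], ?_, by simpa using hx, by simpa using hy⟩
        simp only [degD, List.length_nil, List.length_cons] at hd ⊢
        omega) _
    · have hb := mt hg.2 ha
      have la := List.length_pos_iff.2 ha
      have lb := List.length_pos_iff.2 hb
      rw [← tens_single, contr_tens x y (single_mem (by exact ha) _), cone_single, cone_single,
        tens_single, tens_single]
      refine Submodule.add_mem _ (single_mem (by
        refine ⟨by simp [good, hb], ?_, by simpa [hx] using hpa, hpb⟩
        simp only [degD, List.length_cons]
        omega) _) ?_
      rw [aug_single]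
      split_ifs with h1
      · refine Submodule.smul_mem _ _ (single_mem (by
          refine ⟨by simp [good], ?_, by simpa using hx, by simpa [hy] using hpb⟩
          simp only [degD, List.length_cons, List.length_nil]
          omega) _)
      · simp
  · have : ((bdD : Dc R X Y →ₗ[R] Dc R X Y) ∘ₗ contr x y +
        (contr x y : Dc R X Y →ₗ[R] Dc R X Y) ∘ₗ bdD) z = (LinearMap.id : Dc R X Y →ₗ[R] _) z :=
      map_eq _ _ (fun p hp => by simpa using contr_spec x y hp.1) hz
    simpa [hb] using this

/-- An Alexander–Whitney map. -/
theorem exists_AW (R : Type*) [CommRing R] (X Y : Type*) :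
    ∃ W : Ch R (X × Y) →ₗ[R] Dc R X Y, (∀ z, bdD (W z) = W (bd z)) ∧
      W (Finsupp.single [] 1) = Finsupp.single ([], []) 1 ∧
      ∀ l, W (Finsupp.single l 1) ∈ SupD R l.length {x | ∃ q ∈ l, q.1 = x} {y | ∃ q ∈ l, q.2 = y} := by
  obtain ⟨H, hH⟩ := exists_carried (R := R) (ι := List (X × Y)) (E := Dc R X Y) List.length bd bd_bd
    bdD (fun _ => True)
    (fun l => SupD R (l.length - 1) {x | ∃ q ∈ l, q.1 = x} {y | ∃ q ∈ l, q.2 = y})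
    (fun l => SupD R l.length {x | ∃ q ∈ l, q.1 = x} {y | ∃ q ∈ l, q.2 = y}) 0 1
    (fun l _ => by
      rw [bd_single]
      refine supported_mono' (bdl_mem l) ?_
      intro m hm
      refine ⟨trivial, by have := hm.2; omega, ?_⟩
      rw [show m.length = l.length - 1 by have := hm.2; omega]
      refine SupD_mono ?_ ?_ <;> rintro x ⟨q, hq, h⟩ <;> exact ⟨q, hm.1.subset hq, h⟩)
    (fun l _ _ => Submodule.zero_mem _) (by simp)
    (fun l _ hl z hz hd => by
      obtain ⟨q, hq⟩ := List.exists_mem_of_length_pos hl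
      have := SupD_exact (by exact ⟨q.1, q, hq, rfl⟩) (by exact ⟨q.2, q, hq, rfl⟩) hz hd
      rwa [Nat.sub_add_cancel hl] at this)
    (fun _ => Finsupp.single ([], []) 1)
    (fun l _ hl => single_mem (by simp [good, degD, hl]) _)
    (fun l _ hl => by
      rw [← tens_single, bdD_tens]
      simp [bp_apply, bdl, aug_nil])
  refine ⟨H, fun z => ?_, (hH [] trivial).2.2 rfl, fun l => (hH l trivial).1⟩
  refine map_eq (s := univ) ((bdD : Dc R X Y →ₗ[R] Dc R X Y) ∘ₗ H)
    (H ∘ₗ (bd : Ch R (X × Y) →ₗ[R] Ch R (X × Y))) (fun l _ => ?_) (by simp)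
  simpa using (hH l trivial).2.1

lemma degD_eq_zero {p : List X × List Y} (hp : good p) (h : degD p = 0) : p = ([], []) := by
  obtain ⟨a, b⟩ := p
  simp only [good] at hp
  by_cases ha : a = []
  · rw [ha, hp.1 ha]
  · have h1 := List.length_pos_iff.2 ha
    have h2 := List.length_pos_iff.2 (mt hp.2 ha)
    simp only [degD] at h
    omega

lemma ne_nil_of_degD {p : List X × List Y} (hp : good p) (h : 0 < degD p) :
    p.1 ≠ [] ∧ p.2 ≠ [] := by
  obtain ⟨a, b⟩ := p
  simp only [good] at hp
  by_cases ha : a = []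
  · simp [degD, ha, hp.1 ha] at h
  · exact ⟨ha, mt hp.2 ha⟩

/-- An Eilenberg–Zilber map. -/
theorem exists_EZ (R : Type*) [CommRing R] (X Y : Type*) :
    ∃ G : Dc R X Y →ₗ[R] Ch R (X × Y),
      (∀ z ∈ Finsupp.supported R R {p | good p}, bd (G z) = G (bdD z)) ∧
      G (Finsupp.single ([], []) 1) = Finsupp.single [] 1 ∧
      ∀ p, good p → G (Finsupp.single p 1) ∈ Lst R (degD p) {q | q.1 ∈ p.1 ∧ q.2 ∈ p.2} := by
  obtain ⟨H, hH⟩ := exists_carried (R := R) (ι := List X × List Y) (E := Ch R (X × Y)) degD bdD bdD_bdD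
    bd good (fun p => Lst R (degD p - 1) {q | q.1 ∈ p.1 ∧ q.2 ∈ p.2})
    (fun p => Lst R (degD p) {q | q.1 ∈ p.1 ∧ q.2 ∈ p.2}) 0 1
    (fun p hp => by
      refine supported_mono' (bdD_single_mem hp) ?_
      intro m hm
      refine ⟨hm.1, by have := hm.2.1; omega, ?_⟩
      rw [show degD m = degD p - 1 by have := hm.2.1; omega]
      exact Lst_mono (by intro q hq; exact ⟨hm.2.2.1 hq.1, hm.2.2.2 hq.2⟩))
    (fun l _ _ => Submodule.zero_mem _) (by simp)
    (fun p hp hl z hz hd => by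
      have hne := ne_nil_of_degD hp hl
      obtain ⟨x, hx⟩ := List.exists_mem_of_ne_nil _ hne.1
      obtain ⟨y, hy⟩ := List.exists_mem_of_ne_nil _ hne.2
      have := Lst_exact (by exact ⟨(x, y), hx, hy⟩) hz hd
      rwa [Nat.sub_add_cancel hl] at this)
    (fun _ => Finsupp.single [] 1)
    (fun l _ hl => single_mem (by simp [hl]) _)
    (fun l _ hl => by simp [bdl])
  refine ⟨H, fun z hz => ?_, (hH ([], []) (by simp [good])).2.2 rfl, fun p hp => (hH p hp).1⟩
  exact map_eq ((bd : Ch R (X × Y) →ₗ[R] Ch R (X × Y)) ∘ₗ H)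
    (H ∘ₗ (bdD : Dc R X Y →ₗ[R] Dc R X Y)) (fun p hp => by simpa using (hH p hp).2.1) hz

/-- A self-map of the tensor complex respecting carriers is homotopic to the identity. -/
theorem exists_homotopy_tensor (P : Dc R X Y →ₗ[R] Dc R X Y)
    (hP : ∀ z ∈ Finsupp.supported R R {p | good p}, bdD (P z) = P (bdD z))
    (hP0 : P (Finsupp.single ([], []) 1) = Finsupp.single ([], []) 1)
    (hPs : ∀ p, good p → P (Finsupp.single p 1) ∈ SupD R (degD p) {x | x ∈ p.1} {y | y ∈ p.2}) :
    ∃ L : Dc R X Y →ₗ[R] Dc R X Y,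
      (∀ z ∈ Finsupp.supported R R {p | good p}, bdD (L z) = P z - z - L (bdD z)) ∧
      ∀ p, good p → L (Finsupp.single p 1) ∈ SupD R (degD p + 1) {x | x ∈ p.1} {y | y ∈ p.2} := by
  obtain ⟨H, hH⟩ := exists_carried (R := R) (ι := List X × List Y) (E := Dc R X Y) degD bdD bdD_bdD
    bdD good (fun p => SupD R (degD p) {x | x ∈ p.1} {y | y ∈ p.2})
    (fun p => SupD R (degD p + 1) {x | x ∈ p.1} {y | y ∈ p.2}) (P - LinearMap.id) (-1)
    (fun p hp => by
      refine supported_mono' (bdD_single_mem hp) ?_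
      intro m hm
      refine ⟨hm.1, by have := hm.2.1; omega, ?_⟩
      rw [hm.2.1]
      exact SupD_mono hm.2.2.1 hm.2.2.2)
    (fun p hp _ => Submodule.sub_mem _ (hPs p hp)
      (single_mem (by exact ⟨hp, rfl, fun _ h => h, fun _ h => h⟩) _))
    (fun p hp => by simp [hP _ (single_mem (by exact hp) 1)])
    (fun p hp hl z hz hd => by
      have hne := ne_nil_of_degD hp hl
      exact SupD_exact (List.exists_mem_of_ne_nil _ hne.1) (List.exists_mem_of_ne_nil _ hne.2) hz hd)
    (fun _ => 0) (fun _ _ _ => Submodule.zero_mem _)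
    (fun p hp hl => by
      rw [degD_eq_zero hp hl]
      simp [hP0])
  refine ⟨H, fun z hz => ?_, fun p hp => (hH p hp).1⟩
  exact map_eq ((bdD : Dc R X Y →ₗ[R] Dc R X Y) ∘ₗ H) (P - LinearMap.id - H ∘ₗ bdD)
    (fun p hp => by simpa [sub_eq_add_neg] using (hH p hp).2.1) hz

end Tensor

/-! ### Vanishing for products -/

section Product

lemma aug_comp {T : Ch R X →ₗ[R] Ch R X} (hT : ∀ z, bd (T z) = T (bd z))
    (hT0 : T (Finsupp.single [] 1) = Finsupp.single [] 1)
    (hTl : ∀ l, T (Finsupp.single l 1) ∈ Lst R l.length univ) (z : Ch R X) :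
    aug (T z) = aug z := by
  refine map_eq (s := univ) ((aug : Ch R X →ₗ[R] R) ∘ₗ T) aug (fun l _ => ?_) (by simp)
  rw [LinearMap.comp_apply]
  by_cases hl : l.length = 1
  · have h1 := hTl l
    rw [hl] at h1
    have h2 : Finsupp.single l (1 : R) ∈ Lst R 1 univ := single_mem (by exact ⟨hl, by simp⟩) _
    have := bd_of_mem_one h1
    rw [hT, bd_of_mem_one h2, map_smul, hT0] at this
    simpa using (congrArg (fun z => z ([] : List X)) this).symm
  · rw [aug_of_mem hl (fun m hm => hm.1) (hTl l), aug_single, if_neg hl]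

lemma bp_comp {T : Ch R X →ₗ[R] Ch R X} (hT : ∀ z, bd (T z) = T (bd z))
    (hT0 : T (Finsupp.single [] 1) = Finsupp.single [] 1)
    (hTl : ∀ l, T (Finsupp.single l 1) ∈ Lst R l.length univ) (z : Ch R X) :
    bp (T z) = T (bp z) := by
  rw [bp_apply, bp_apply, map_sub, map_smul, hT0, hT, aug_comp hT hT0 hTl]

lemma sgn_comp {T : Ch R X →ₗ[R] Ch R X}
    (hTl : ∀ l, T (Finsupp.single l 1) ∈ Lst R l.length univ) (z : Ch R X) :
    sgn (T z) = T (sgn z) := by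
  refine map_eq (s := univ) ((sgn : Ch R X →ₗ[R] Ch R X) ∘ₗ T) (T ∘ₗ sgn) (fun l _ => ?_) (by simp)
  rw [LinearMap.comp_apply, LinearMap.comp_apply, sgn_of_mem (fun m hm => hm.1) (hTl l), sgn_single,
    map_smul]

/-- The tensor square of an operator. -/
def tensMap (T : Ch R X →ₗ[R] Ch R X) : Dc R X X →ₗ[R] Dc R X X :=
  Finsupp.linearCombination R fun p => tens (T (Finsupp.single p.1 1)) (T (Finsupp.single p.2 1))

lemma tensMap_tens (T : Ch R X →ₗ[R] Ch R X) (z w : Ch R X) :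
    tensMap T (tens z w) = tens (T z) (T w) := by
  refine bilin_eq (s := univ) (t := univ) (tens.compr₂ (tensMap T)) (tens.compl₁₂ T T)
    (fun a _ b _ => ?_) (by simp) (by simp)
  simp [tensMap]

lemma bdD_tensMap {T : Ch R X →ₗ[R] Ch R X} (hT : ∀ z, bd (T z) = T (bd z))
    (hT0 : T (Finsupp.single [] 1) = Finsupp.single [] 1)
    (hTl : ∀ l, T (Finsupp.single l 1) ∈ Lst R l.length univ) (z : Dc R X X) :
    bdD (tensMap T z) = tensMap T (bdD z) := by
  refine map_eq (s := univ) ((bdD : Dc R X X →ₗ[R] Dc R X X) ∘ₗ tensMap T)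
    ((tensMap T : Dc R X X →ₗ[R] Dc R X X) ∘ₗ bdD) (fun p _ => ?_) (by simp)
  obtain ⟨a, b⟩ := p
  rw [LinearMap.comp_apply, LinearMap.comp_apply, ← tens_single a b, tensMap_tens, bdD_tens,
    bdD_tens, map_add, map_add, map_smul, tensMap_tens, tensMap_tens, bp_comp hT hT0 hTl,
    bp_comp hT hT0 hTl, sgn_comp hTl, aug_comp hT hT0 hTl, aug_comp hT hT0 hTl,
    ← tens_single ([] : List X) ([] : List X), tensMap_tens, hT0]

lemma tens_mem_SupD {i j : ℕ} {Q Q' : Set X} (h : i = 0 ↔ j = 0) {z w : Ch R X}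
    (hz : z ∈ Lst R i Q) (hw : w ∈ Lst R j Q') : tens z w ∈ SupD R (i + j - 1) Q Q' := by
  refine supported_mono' (tens_mem hz hw) ?_
  rintro ⟨a, b⟩ ⟨ha, hb⟩
  have h1 := ha.1
  have h2 := hb.1
  dsimp only at h1 h2
  refine ⟨?_, by dsimp only [degD]; rw [h1, h2], ha.2, hb.2⟩
  simp only [good]
  rw [← List.length_eq_zero_iff, ← List.length_eq_zero_iff, h1, h2, h]

lemma good_length {p : List X × List Y} (hp : good p) : p.1.length = 0 ↔ p.2.length = 0 := by
  rw [List.length_eq_zero_iff, List.length_eq_zero_iff]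
  exact hp

lemma map_SupD_mem_Lst {G : Dc R X Y →ₗ[R] Ch R (X × Y)}
    (hG : ∀ p, good p → G (Finsupp.single p 1) ∈ Lst R (degD p) {q | q.1 ∈ p.1 ∧ q.2 ∈ p.2})
    {k : ℕ} {Q : Set X} {Q' : Set Y} {z : Dc R X Y} (hz : z ∈ SupD R k Q Q') :
    G z ∈ Lst R k (Q ×ˢ Q') := by
  refine map_mem G (fun p hp => ?_) hz
  have := hG p hp.1
  rw [hp.2.1] at this
  refine Lst_mono ?_ this
  rintro ⟨x, y⟩ ⟨hx, hy⟩
  exact ⟨hp.2.2.1 x hx, hp.2.2.2 y hy⟩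

theorem relVan_prod [MetricSpace X] [CompactSpace X] {n : ℕ}
    (h : ∀ k > n, ∀ A : Set X, IsClosed A → RelVan R k A) {k : ℕ} (hk : 2 * n < k)
    (C : Set (X × X)) : RelVan R k C := by
  intro c hc hC
  obtain ⟨ρ, hρ, hP⟩ := exists_homotopy hc hC
  obtain ⟨T, hT, hT0, hTl, δ, hδ, hTs⟩ := exists_reduction h (half_pos hρ)
  obtain ⟨W, hW, hW0, hWl⟩ := exists_AW R X X
  obtain ⟨G, hG, hG0, hGl⟩ := exists_EZ R X X
  have hWg : ∀ z, tensMap T (W z) ∈ Finsupp.supported R R {p | good p} := fun z =>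
    map_mem (s := univ) (tensMap T ∘ₗ W) (fun l _ => by
      refine map_mem (tensMap T) (fun p hp => ?_) (hWl l)
      rw [← tens_single p.1 p.2, tensMap_tens]
      exact supported_mono' (tens_mem_SupD (good_length hp.1) (hTl _) (hTl _)) fun q hq => hq.1)
      (by simp)
  have small : ∀ (l : List (X × X)) {a : List X}, Sml (min δ (ρ / 2)) l →
      ((∀ x ∈ a, ∃ q ∈ l, q.1 = x) ∨ ∀ x ∈ a, ∃ q ∈ l, q.2 = x) → Sml δ a := by
    rintro l a hl (h | h) x hx y hy
    · obtain ⟨q, hq, rfl⟩ := h x hx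
      obtain ⟨q', hq', rfl⟩ := h y hy
      exact (le_max_left _ _).trans_lt ((hl q hq q' hq').trans_le (min_le_left _ _))
    · obtain ⟨q, hq, rfl⟩ := h x hx
      obtain ⟨q', hq', rfl⟩ := h y hy
      exact (le_max_right _ _).trans_lt ((hl q hq q' hq').trans_le (min_le_left _ _))
  obtain ⟨b, hb, hb'⟩ := hP (G ∘ₗ tensMap T ∘ₗ W)
    (fun z => by
      simp only [LinearMap.comp_apply]
      rw [hG _ (hWg z), bdD_tensMap hT hT0 hTl, hW])
    (by
      simp only [LinearMap.comp_apply]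
      rw [hW0, ← tens_single ([] : List X) ([] : List X), tensMap_tens, hT0, tens_single, hG0])
    (fun l => by
      simp only [LinearMap.comp_apply]
      rw [← univ_prod_univ]
      refine map_SupD_mem_Lst hGl (map_mem (tensMap T) (fun p hp => ?_) (hWl l))
      rw [← tens_single p.1 p.2, tensMap_tens, ← hp.2.1]
      exact tens_mem_SupD (good_length hp.1) (hTl _) (hTl _))
    ⟨min δ (ρ / 2), by positivity, fun l hl hne => by
      simp only [LinearMap.comp_apply]
      refine Lst_mono ?_ (map_SupD_mem_Lst hGl
        (Q := {q | ∃ x ∈ l, dist q x.1 < ρ / 2}) (Q' := {q | ∃ x ∈ l, dist q x.2 < ρ / 2})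
        (map_mem (tensMap T) (fun p hp => ?_) (hWl l)))
      · rintro ⟨x, y⟩ ⟨⟨q, hq, hqx⟩, q', hq', hqy⟩
        refine ⟨q, hq, max_lt (by linarith) ?_⟩
        have h1 := (le_max_right _ _).trans_lt ((hl q' hq' q hq).trans_le (min_le_right _ _))
        have h2 := dist_triangle y q'.2 q.2
        dsimp only at hqy h1 ⊢
        linarith
      · have hpos : 0 < degD p := by rw [hp.2.1]; exact List.length_pos_iff.2 hne
        have hne := ne_nil_of_degD hp.1 hpos
        have h1 := (hTs p.1 (small l hl (Or.inl hp.2.2.1)) hne.1).1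
        have h2 := (hTs p.2 (small l hl (Or.inr hp.2.2.2)) hne.2).1
        rw [← tens_single p.1 p.2, tensMap_tens, ← hp.2.1]
        refine SupD_mono ?_ ?_ (tens_mem_SupD (good_length hp.1) h1 h2)
        · rintro x ⟨y, hy, hxy⟩
          obtain ⟨q, hq, rfl⟩ := hp.2.2.1 y hy
          exact ⟨q, hq, hxy⟩
        · rintro x ⟨y, hy, hxy⟩
          obtain ⟨q, hq, rfl⟩ := hp.2.2.2 y hy
          exact ⟨q, hq, hxy⟩⟩
  refine ⟨b, hb, hb'.imp₂ (LocZ.univ_iff.2 ⟨min δ (ρ / 2), by positivity, ?_⟩)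
    (c' := fun l => G (tensMap T (W (Finsupp.single l 1)))) fun l _ h1 h2 => ?_⟩
  · intro l hl hs
    have : tensMap T (W (Finsupp.single l 1)) = 0 := by
      refine map_eq (tensMap T) 0 (fun p hp => ?_) (hWl l)
      have hpos : 0 < degD p := by rw [hp.2.1, hl]; omega
      have hne := ne_nil_of_degD hp.1 hpos
      have hd : p.1.length + p.2.length - 1 = k + 1 := by rw [← hl]; exact hp.2.1
      rw [← tens_single p.1 p.2, tensMap_tens, LinearMap.zero_apply]
      by_cases h1 : n + 1 < p.1.length
      · rw [(hTs p.1 (small l hs (Or.inl hp.2.2.1)) hne.1).2 h1, map_zero, LinearMap.zero_apply]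
      · rw [(hTs p.2 (small l hs (Or.inr hp.2.2.2)) hne.2).2 (by omega), map_zero]
    simp only [this, map_zero]
  · simp only [LinearMap.comp_apply] at h1
    rw [h2] at h1
    simpa using h1

end Product

/-! ### Cross products -/

section Cross

variable {F : Type*} [Field F]

/-- The cross square of a cochain. -/
def crossSq (c : List X → F) : Dc F X X →ₗ[F] F :=
  Finsupp.linearCombination F fun p => c p.1 * c p.2

lemma crossSq_tens (c : List X → F) (z w : Ch F X) :
    crossSq c (tens z w) = ev c z * ev c w := by
  refine bilin_eq (s := univ) (t := univ) (tens.compr₂ (crossSq c))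
    ((LinearMap.mul F F).compl₁₂ (ev c) (ev c)) (fun a _ b _ => ?_) (by simp) (by simp)
  simp [crossSq]

lemma crossSq_bdD {c : List X → F} (h0 : c [] = 0) {p : List X × List X} (h1 : dL c p.1 = 0)
    (h2 : dL c p.2 = 0) : crossSq c (bdD (Finsupp.single p 1)) = 0 := by
  have h : ∀ a : List X, dL c a = 0 → ev c (bp (Finsupp.single a 1)) = 0 := fun a ha => by
    rw [bp_apply, bd_single, map_sub, ← dL_eq_ev, ha, map_smul]
    simp [h0]
  rw [← tens_single p.1 p.2, bdD_tens, map_add, map_add, map_smul, crossSq_tens, crossSq_tens,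
    h _ h1, h _ h2]
  simp [crossSq, h0]

/-- A functional vanishing on the kernel of a linear map factors through it. -/
lemma exists_factor {V W : Type*} [AddCommGroup V] [AddCommGroup W] [Module F V] [Module F W]
    (φ : V →ₗ[F] W) (f : V →ₗ[F] F) (h : ∀ v, φ v = 0 → f v = 0) :
    ∃ β : W →ₗ[F] F, β ∘ₗ φ = f := by
  have : f ∈ LinearMap.range φ.dualMap := by
    rw [LinearMap.range_dualMap_eq_dualAnnihilator_ker, Submodule.mem_dualAnnihilator]
    exact fun v hv => h v hv
  exact this

/-- A cochain pairing to zero with all small relative cycles is a relative coboundary. -/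
lemma exists_cycle_of_not_coboundary [MetricSpace X] {k : ℕ} {A : Set X} {c : List X → F} {δ : ℝ}
    (hδ : 0 < δ) (hc : ¬∃ b : List X → F, LocZ k A b ∧ LocZ (k + 1) univ fun l => c l - dL b l) :
    ∃ z ∈ Finsupp.supported F F {l : List X | l.length = k + 1 ∧ Sml δ l},
      bd z ∈ Finsupp.supported F F {m : List X | m.length = k ∧ Sml δ m ∧
        ∃ x ∈ m, ∃ a ∈ A, dist x a < δ} ∧ ev c z ≠ 0 := by
  classical
  by_contra! hcon
  let near : List X → Prop := fun m => ∃ x ∈ m, ∃ a ∈ A, dist x a < δ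
  let π : Ch F X →ₗ[F] Ch F X :=
    Finsupp.linearCombination F fun m => if near m then 0 else Finsupp.single m 1
  let V := Finsupp.supported F F {l : List X | l.length = k + 1 ∧ Sml δ l}
  let φ : V →ₗ[F] Ch F X := π ∘ₗ bd ∘ₗ V.subtype
  let f : Module.Dual F V := (ev c) ∘ₗ V.subtype
  have hf : ∀ v, φ v = 0 → f v = 0 := by
    rintro ⟨z, hz⟩ hker
    have hker : π (bd z) = 0 := hker
    refine hcon z hz ?_
    have h1 : bd z ∈ Finsupp.supported F F {m : List X | m.length = k ∧ Sml δ m} := by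
      refine map_mem bd (fun l hl => ?_) hz
      rw [bd_single]
      refine supported_mono' (bdl_mem l) ?_
      intro m hm
      exact ⟨by have := hm.2; have := hl.1; omega, hl.2.sub hm.1.subset⟩
    have h2 : ((LinearMap.id : Ch F X →ₗ[F] Ch F X) - π) (bd z) ∈ Finsupp.supported F F {m : List X | near m} := by
      refine map_mem (s := univ) ((LinearMap.id : Ch F X →ₗ[F] Ch F X) - π) (fun m _ => ?_) (by simp)
      by_cases hm : near m
      · simpa [π, hm] using single_mem (R := F) (s := {m : List X | near m}) hm 1
      · simp [π, hm]
    rw [LinearMap.sub_apply, hker, sub_zero, LinearMap.id_apply] at h2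
    have h3 : bd z ∈ Finsupp.supported F F {m : List X | m.length = k ∧ Sml δ m} ⊓
      Finsupp.supported F F {m : List X | near m} := ⟨h1, h2⟩
    rw [← Finsupp.supported_inter] at h3
    exact supported_mono' h3 fun m hm => ⟨hm.1.1, hm.1.2, hm.2⟩
  obtain ⟨β, hβ⟩ := exists_factor (V := V) (W := Ch F X) φ f hf
  refine hc ⟨fun m => β (π (Finsupp.single m 1)), ⟨δ, hδ, fun l _ _ hn => ?_⟩,
    LocZ.univ_iff.2 ⟨δ, hδ, fun l hl hs => ?_⟩⟩
  · have : near l := hn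
    simp [π, this]
  · have h1 := LinearMap.congr_fun hβ ⟨Finsupp.single l 1, single_mem (by exact ⟨hl, hs⟩) _⟩
    have h2 : β (π (bdl l)) = c l := by simpa [φ, f] using h1
    have h3 : ev (fun m => β (π (Finsupp.single m 1))) (bdl l) = (β ∘ₗ π) (bdl l) :=
      map_eq (s := univ) _ _ (fun m _ => by simp) (by simp)
    rw [dL_eq_ev, h3, LinearMap.comp_apply, h2, sub_self]

theorem relVan_of_prod [MetricSpace X] {k : ℕ} (hk : 1 ≤ k)
    (h : ∀ C : Set (X × X), IsClosed C → RelVan F (2 * k) C) {A : Set X} (hA : IsClosed A) :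
    RelVan F k A := by
  intro c₀ hc₀ hA₀
  obtain ⟨δ₁, hδ₁, hc₀⟩ := LocZ.univ_iff.1 hc₀
  obtain ⟨δ₂, hδ₂, hA₀⟩ := hA₀
  let c : List X → F := fun l => if l.length = k + 1 then c₀ l else 0
  have c0 : c [] = 0 := by simp [c]
  have hcc : ∀ l : List X, Sml δ₁ l → dL c l = 0 := fun l hl => by
    by_cases hlen : l.length = k + 2
    · rw [← hc₀ l hlen hl]
      exact dL_congr fun m hm hml => if_pos (by omega)
    · exact dL_eq_zero fun m hm hml => if_neg (by omega)
  have hcA : ∀ l : List X, Sml δ₂ l → (∃ x ∈ l, ∃ a ∈ A, dist x a < δ₂) → c l = 0 :=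
    fun l hl hn => by
      by_cases hlen : l.length = k + 1
      · exact (if_pos hlen).trans (hA₀ l hlen hl hn)
      · exact if_neg hlen
  suffices hs : ∃ b : List X → F, LocZ k A b ∧ LocZ (k + 1) univ fun l => c l - dL b l by
    obtain ⟨b, hb, hb'⟩ := hs
    exact ⟨b, hb, hb'.imp fun l hl h0 => by rwa [show c l = c₀ l from if_pos hl] at h0⟩
  clear_value c
  by_contra hcon
  obtain ⟨W, hW, hW0, hWl⟩ := exists_AW F X X
  obtain ⟨G, hG, hG0, hGl⟩ := exists_EZ F X X
  let C : Set (X × X) := {p | p.1 ∈ A ∨ p.2 ∈ A}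
  have hC : IsClosed C := (hA.preimage continuous_fst).union (hA.preimage continuous_snd)
  have proj : ∀ {δ : ℝ} (l : List (X × X)) {a b : List X}, Sml δ l →
      (∀ x ∈ a, ∃ q ∈ l, q.1 = x) → (∀ x ∈ b, ∃ q ∈ l, q.2 = x) → Sml δ a ∧ Sml δ b := by
    intro δ l a b hl h1 h2
    constructor
    · intro x hx y hy
      obtain ⟨q, hq, rfl⟩ := h1 x hx
      obtain ⟨q', hq', rfl⟩ := h1 y hy
      exact (le_max_left _ _).trans_lt (hl q hq q' hq')
    · intro x hx y hy
      obtain ⟨q, hq, rfl⟩ := h2 x hx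
      obtain ⟨q', hq', rfl⟩ := h2 y hy
      exact (le_max_right _ _).trans_lt (hl q hq q' hq')
  let x : List (X × X) → F := fun l => crossSq c (W (Finsupp.single l 1))
  have hx : ∀ z, ev x z = crossSq c (W z) := fun z =>
    map_eq (s := univ) (ev x) (crossSq c ∘ₗ W) (fun l _ => by simp [x]) (by simp)
  have hxc : LocZ (2 * k + 2) univ (dL x) := by
    refine LocZ.univ_iff.2 ⟨δ₁, hδ₁, fun l hl hs => ?_⟩
    rw [dL_eq_ev, hx, ← bd_single, ← hW]
    refine map_eq (crossSq c ∘ₗ (bdD : Dc F X X →ₗ[F] Dc F X X)) 0 (fun p hp => ?_) (hWl l)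
    have := proj l hs hp.2.2.1 hp.2.2.2
    exact crossSq_bdD c0 (hcc _ this.1) (hcc _ this.2)
  have hxC : LocZ (2 * k + 1) C x := by
    refine ⟨δ₂ / 2, half_pos hδ₂, fun l hl hs hn => ?_⟩
    obtain ⟨q, hq, a, ha, hqa⟩ := hn
    refine map_eq (crossSq c) 0 (fun p hp => ?_) (hWl l)
    have hpos : 0 < degD p := by rw [hp.2.1, hl]; omega
    have hne := ne_nil_of_degD hp.1 hpos
    have hsm := proj l hs hp.2.2.1 hp.2.2.2
    have hz : c p.1 = 0 ∨ c p.2 = 0 := by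
      rcases ha with ha | ha
      · left
        obtain ⟨y, hy⟩ := List.exists_mem_of_ne_nil _ hne.1
        refine hcA _ (hsm.1.mono (by linarith)) ⟨y, hy, a.1, ha, ?_⟩
        obtain ⟨q', hq', rfl⟩ := hp.2.2.1 y hy
        have h1 := (le_max_left _ _).trans_lt (hs q' hq' q hq)
        have h2 := (le_max_left _ _).trans_lt hqa
        linarith [dist_triangle q'.1 q.1 a.1]
      · right
        obtain ⟨y, hy⟩ := List.exists_mem_of_ne_nil _ hne.2
        refine hcA _ (hsm.2.mono (by linarith)) ⟨y, hy, a.2, ha, ?_⟩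
        obtain ⟨q', hq', rfl⟩ := hp.2.2.2 y hy
        have h1 := (le_max_right _ _).trans_lt (hs q' hq' q hq)
        have h2 := (le_max_right _ _).trans_lt hqa
        linarith [dist_triangle q'.2 q.2 a.2]
    rcases hz with hz | hz <;> simp [crossSq, hz]
  obtain ⟨ψ, ⟨δ₃, hδ₃, hψ⟩, hψ'⟩ := h C hC x hxc hxC
  obtain ⟨δ₄, hδ₄, hψ'⟩ := LocZ.univ_iff.1 hψ'
  obtain ⟨δ, hδ, hle⟩ : ∃ δ > 0, δ ≤ δ₁ ∧ 2 * δ ≤ δ₂ ∧ 2 * δ ≤ δ₃ ∧ δ ≤ δ₄ := by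
    refine ⟨min (min δ₁ (δ₂ / 2)) (min (δ₃ / 2) δ₄), by positivity, ?_, ?_, ?_, ?_⟩
    · exact (min_le_left _ _).trans (min_le_left _ _)
    · have := (min_le_left (min δ₁ (δ₂ / 2)) (min (δ₃ / 2) δ₄)).trans (min_le_right _ _)
      linarith
    · have := (min_le_right (min δ₁ (δ₂ / 2)) (min (δ₃ / 2) δ₄)).trans (min_le_left _ _)
      linarith
    · exact (min_le_right _ _).trans (min_le_right _ _)
  obtain ⟨z, hz, hbz, hne⟩ := exists_cycle_of_not_coboundary hδ hcon
  have hzz := tens_mem hz hz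
  have hbzz : bdD (tens z z) ∈ Finsupp.supported F F {p : List X × List X | good p ∧
      degD p = 2 * k ∧ Sml δ p.1 ∧ Sml δ p.2 ∧ ((∃ x ∈ p.1, ∃ a ∈ A, dist x a < δ) ∨
        ∃ x ∈ p.2, ∃ a ∈ A, dist x a < δ)} := by
    have ha : aug z = 0 := aug_of_mem (k := k + 1) (by omega) (fun l hl => hl.1) hz
    have hb : bp z = bd z := by rw [bp_apply, ha, zero_smul, sub_zero]
    rw [bdD_tens, ha, hb, zero_mul, zero_smul, add_zero]
    have gd : ∀ {p : List X × List X}, p.1.length ≠ 0 → p.2.length ≠ 0 → good p := by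
      intro p h1 h2
      rw [ne_eq, List.length_eq_zero_iff] at h1 h2
      simp [good, h1, h2]
    refine Submodule.add_mem _ (supported_mono' (tens_mem hbz hz) ?_)
      (supported_mono' (tens_mem (sgn_mem hz) hbz) ?_)
    · rintro ⟨a, b⟩ ⟨⟨h1, h2, h3⟩, h4, h5⟩
      dsimp only at h1 h4
      exact ⟨gd (by dsimp only; omega) (by dsimp only; omega), by dsimp only [degD]; omega,
        h2, h5, Or.inl h3⟩
    · rintro ⟨b, a⟩ ⟨⟨h4, h5⟩, h1, h2, h3⟩
      dsimp only at h1 h4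
      exact ⟨gd (by dsimp only; omega) (by dsimp only; omega), by dsimp only [degD]; omega,
        h5, h2, Or.inr h3⟩
  have hg : tens z z ∈ Finsupp.supported F F {p : List X × List X | good p} := by
    refine supported_mono' hzz ?_
    rintro ⟨a, b⟩ ⟨⟨h1, _⟩, h2, _⟩
    dsimp only at h1 h2
    have h1 : a ≠ [] := by rintro rfl; simp at h1
    have h2 : b ≠ [] := by rintro rfl; simp at h2
    simp [good, h1, h2]
  have hWs : ∀ p : List X × List X, good p → W (G (Finsupp.single p 1)) ∈
      SupD F (degD p) {x | x ∈ p.1} {y | y ∈ p.2} := fun p hp => by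
    refine map_mem W (fun l hl => ?_) (hGl p hp)
    rw [← hl.1]
    refine SupD_mono ?_ ?_ (hWl l)
    · rintro _ ⟨q, hq, rfl⟩
      exact (hl.2 q hq).1
    · rintro _ ⟨q, hq, rfl⟩
      exact (hl.2 q hq).2
  obtain ⟨L, hL, hLs⟩ := exists_homotopy_tensor (W ∘ₗ G)
    (fun w hw => by simp only [LinearMap.comp_apply]; rw [hW, hG w hw])
    (by simp only [LinearMap.comp_apply]; rw [hG0, hW0]) hWs
  have e1 : crossSq c (bdD (L (tens z z))) = 0 := by
    refine map_eq (crossSq c ∘ₗ (bdD : Dc F X X →ₗ[F] Dc F X X) ∘ₗ L) 0 (fun p hp => ?_) hzz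
    obtain ⟨a, b⟩ := p
    obtain ⟨⟨h1, h2⟩, h3, h4⟩ := hp
    dsimp only at h1 h2 h3 h4
    have hgp : good (a, b) := by
      have h1 : a ≠ [] := by rintro rfl; simp at h1
      have h3 : b ≠ [] := by rintro rfl; simp at h3
      simp [good, h1, h3]
    refine map_eq (crossSq c ∘ₗ (bdD : Dc F X X →ₗ[F] Dc F X X)) 0 (fun q hq => ?_) (hLs _ hgp)
    exact crossSq_bdD c0 (hcc _ ((h2.sub hq.2.2.1).mono hle.1))
      (hcc _ ((h4.sub hq.2.2.2).mono hle.1))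
  have nr : ∀ {m m' : List X}, m' ⊆ m → m' ≠ [] → Sml δ m → (∃ x ∈ m, ∃ a ∈ A, dist x a < δ) →
      ∀ x ∈ m', ∃ a ∈ A, dist x a < 2 * δ := by
    rintro m m' hm - hs ⟨x, hx, a, ha, hxa⟩ y hy
    refine ⟨a, ha, ?_⟩
    linarith [dist_triangle y x a, hs y (hm hy) x hx]
  have nrc : ∀ {m m' : List X}, m' ⊆ m → m' ≠ [] → Sml δ m → (∃ x ∈ m, ∃ a ∈ A, dist x a < δ) →
      c m' = 0 := by
    intro m m' hm hne hs hn
    obtain ⟨y, hy⟩ := List.exists_mem_of_ne_nil _ hne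
    obtain ⟨a, ha, hya⟩ := nr hm hne hs hn y hy
    exact hcA _ ((hs.sub hm).mono (by linarith [hle.2.1])) ⟨y, hy, a, ha, by linarith [hle.2.1]⟩
  have e2 : crossSq c (L (bdD (tens z z))) = 0 := by
    refine map_eq (crossSq c ∘ₗ L) 0 (fun p hp => ?_) hbzz
    obtain ⟨h1, h2, h3, h4, h5⟩ := hp
    refine map_eq (crossSq c) 0 (fun q hq => ?_) (hLs p h1)
    have hne := ne_nil_of_degD hq.1 (by rw [hq.2.1]; omega)
    rcases h5 with h5 | h5
    · simp [crossSq, nrc hq.2.2.1 hne.1 h3 h5]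
    · simp [crossSq, nrc hq.2.2.2 hne.2 h4 h5]
  have smallG : ∀ {p : List X × List X} {l : List (X × X)}, Sml δ p.1 → Sml δ p.2 →
      (∀ q ∈ l, q.1 ∈ p.1 ∧ q.2 ∈ p.2) → Sml δ l := fun h1 h2 hl q hq q' hq' =>
    max_lt (h1 _ (hl q hq).1 _ (hl q' hq').1) (h2 _ (hl q hq).2 _ (hl q' hq').2)
  have e3 : crossSq c (W (G (tens z z))) = 0 := by
    have h1 : ev x (G (tens z z)) = ev (dL ψ) (G (tens z z)) := by
      refine map_eq (ev x ∘ₗ G) (ev (dL ψ) ∘ₗ G) (fun p hp => ?_) hzz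
      obtain ⟨a, b⟩ := p
      obtain ⟨⟨h1, h2⟩, h3, h4⟩ := hp
      dsimp only at h1 h2 h3 h4
      have hgp : good (a, b) := by
        have h1 : a ≠ [] := by rintro rfl; simp at h1
        have h3 : b ≠ [] := by rintro rfl; simp at h3
        simp [good, h1, h3]
      refine map_eq (ev x) (ev (dL ψ)) (fun l hl => ?_) (hGl _ hgp)
      have hlen : l.length = 2 * k + 1 := by
        have := hl.1
        dsimp only [degD] at this
        omega
      have := hψ' l hlen ((smallG h2 h4 hl.2).mono hle.2.2.2)
      simpa [sub_eq_zero] using this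
    have h2 : ∀ w, ev (dL ψ) w = ev ψ (bd w) := fun w =>
      map_eq (s := univ) (ev (dL ψ)) (ev ψ ∘ₗ (bd : Ch F (X × X) →ₗ[F] Ch F (X × X)))
        (fun l _ => by
          rw [LinearMap.comp_apply, bd_single, ← dL_eq_ev]
          simp) (by simp)
    rw [← hx, h1, h2, hG _ hg]
    refine map_eq (ev ψ ∘ₗ G) 0 (fun p hp => ?_) hbzz
    obtain ⟨h1, h2, h3, h4, h5⟩ := hp
    refine map_eq (ev ψ) 0 (fun l hl => ?_) (hGl p h1)
    have hlen : l.length = 2 * k := hl.1.trans h2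
    have hne := ne_nil_of_degD h1 (by omega)
    obtain ⟨q, hq⟩ := List.exists_mem_of_length_pos (l := l) (by omega)
    suffices ∃ a ∈ C, dist q a < δ₃ by
      have := hψ l hlen ((smallG h3 h4 hl.2).mono (by linarith [hle.2.2.1])) ⟨q, hq, this⟩
      simp [this]
    rcases h5 with h5 | h5
    · obtain ⟨a, ha, hqa⟩ := nr (List.Subset.refl _) hne.1 h3 h5 q.1 (hl.2 q hq).1
      refine ⟨(a, q.2), Or.inl ha, max_lt ?_ ?_⟩
      · dsimp only; linarith [hle.2.2.1]
      · simpa using hδ₃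
    · obtain ⟨a, ha, hqa⟩ := nr (List.Subset.refl _) hne.2 h4 h5 q.2 (hl.2 q hq).2
      refine ⟨(q.1, a), Or.inr ha, max_lt ?_ ?_⟩
      · simpa using hδ₃
      · dsimp only; linarith [hle.2.2.1]
  have e4 := congrArg (crossSq c) (hL _ hg)
  rw [e1, map_sub, map_sub, e2, LinearMap.comp_apply, e3, crossSq_tens] at e4
  exact hne (by simpa using e4.symm)

end Cross

/-! ### Alexander–Spanier cohomology in terms of lists -/

/-- The cochain `c` vanishes on all `k`-element lists close to the diagonal. -/
def LZ {A : Type*} [Zero A] [TopologicalSpace Y] (k : ℕ) (c : List Y → A) : Prop :=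
  ∀ y : Y, ∃ u, IsOpen u ∧ y ∈ u ∧ ∀ l : List Y, l.length = k → (∀ x ∈ l, x ∈ u) → c l = 0

variable (R Y) in
/-- Vanishing of `H^k(Y; R)`, for `k ≥ 1`. -/
def ASL [TopologicalSpace Y] (k : ℕ) : Prop :=
  ∀ c : List Y → R, LZ (k + 2) (dL c) → ∃ b : List Y → R, LZ (k + 1) (fun l => c l - dL b l)

lemma mem_locZero [TopologicalSpace Y] {A : Type*} [AddCommGroup A] {m : ℕ} (c : List Y → A) :
    (fun s => c (List.ofFn s)) ∈ AS.locZero A Y m ↔ LZ (m + 1) c := by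
  constructor
  · rintro ⟨U, ⟨hU, hc⟩, h⟩ y
    obtain ⟨u, hu, hy⟩ : y ∈ ⋃₀ U := hc ▸ mem_univ y
    refine ⟨u, hU u hu, hy, fun l hl hx => ?_⟩
    obtain ⟨s, rfl⟩ : ∃ s : Fin (m + 1) → Y, List.ofFn s = l := by
      exact hl ▸ ⟨l.get, List.ofFn_get l⟩
    exact h s ⟨u, hu, fun i => hx _ (List.mem_ofFn.2 ⟨i, rfl⟩)⟩
  · intro h
    choose u hu hy hl using h
    refine ⟨range u, ⟨by rintro _ ⟨y, rfl⟩; exact hu y, eq_univ_of_forall fun y =>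
      ⟨u y, ⟨y, rfl⟩, hy y⟩⟩, ?_⟩
    rintro s ⟨_, ⟨y, rfl⟩, hs⟩
    exact hl y _ (by simp) (fun x hx => by
      obtain ⟨i, rfl⟩ := List.mem_ofFn.1 hx
      exact hs i)

lemma exists_ofFn {A : Type*} [Zero A] {m : ℕ} (φ : AS.Cochain A Y m) :
    ∃ c : List Y → A, φ = fun s => c (List.ofFn s) :=
  ⟨extend List.ofFn φ 0, funext fun _ => (List.ofFn_injective.extend_apply _ _ _).symm⟩

lemma sum_ofFn {A : Type*} [AddCommGroup A] (k : ℕ) (c : List Y → A) (s : Fin (k + 1) → Y) :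
    ∑ i : Fin (k + 1), ((-1 : ℤ) ^ (i : ℕ)) • c (List.ofFn (s ∘ i.succAbove)) =
      dL c (List.ofFn s) := by
  induction k generalizing c with
  | zero => simp [dL]
  | succ k ih =>
    have h0 := List.ofFn_succ (f := s)
    rw [Fin.sum_univ_succ, h0, dL, ← ih]
    simp [pow_succ, Function.comp_def, sub_eq_add_neg]

lemma d_ofFn {A : Type*} [AddCommGroup A] (m : ℕ) (c : List Y → A) :
    AS.d A Y m (fun s => c (List.ofFn s)) = fun s => dL c (List.ofFn s) :=
  funext fun s => sum_ofFn (m + 1) c s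

lemma ASH_iff [TopologicalSpace Y] (m : ℕ) : ¬ Nontrivial (AS.ASH R (m + 1) Y) ↔ ASL R Y (m + 1) := by
  rw [not_nontrivial_iff_subsingleton]
  have key : Subsingleton (AS.ASH R (m + 1) Y) ↔ ∀ x ∈ AS.cocycles R Y (m + 1),
      x ∈ AS.cobounds R Y (m + 1) := by
    unfold AS.ASH
    rw [QuotientAddGroup.subsingleton_iff]
    constructor
    · intro h x hx
      have : (⟨x, hx⟩ : AS.cocycles R Y (m + 1)) ∈ (AS.cobounds R Y (m + 1)).comap
        (AS.cocycles R Y (m + 1)).subtype := h ▸ trivial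
      exact this
    · intro h
      exact eq_top_iff.2 fun x _ => h x x.2
  rw [key]
  constructor
  · intro h c hc
    obtain ⟨y, hy⟩ := h (QuotientAddGroup.mk fun s => c (List.ofFn s))
      ((QuotientAddGroup.eq_zero_iff _).2 (by rw [d_ofFn]; exact (mem_locZero _).2 hc))
    obtain ⟨ψ, rfl⟩ := QuotientAddGroup.mk_surjective y
    obtain ⟨b, rfl⟩ := exists_ofFn ψ
    refine ⟨b, (mem_locZero _).1 ?_⟩
    have := QuotientAddGroup.eq.1 hy
    rw [d_ofFn] at this
    convert this using 1
    funext s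
    simp [sub_eq_neg_add]
  · intro h x hx
    obtain ⟨φ, rfl⟩ := QuotientAddGroup.mk_surjective x
    obtain ⟨c, rfl⟩ := exists_ofFn φ
    have hx : AS.d R Y (m + 1) (fun s => c (List.ofFn s)) ∈ AS.locZero R Y (m + 2) :=
      (QuotientAddGroup.eq_zero_iff _).1 hx
    rw [d_ofFn] at hx
    obtain ⟨b, hb⟩ := h c ((mem_locZero _).1 hx)
    refine ⟨QuotientAddGroup.mk fun s => b (List.ofFn s), QuotientAddGroup.eq.2 ?_⟩
    rw [d_ofFn]
    convert (mem_locZero _).2 hb using 1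
    funext s
    simp [sub_eq_neg_add]

/-! ### Pairs and quotients -/

lemma LZ.exists_Sml [MetricSpace X] [TopologicalSpace Y] {A : Type*} [Zero A] {K : Set X}
    (hK : IsCompact K) {q : X → Y} (hq : ContinuousOn q K) {k : ℕ} {c : List Y → A}
    (hc : LZ (k + 1) c) : ∃ δ > 0, ∀ l : List X, l.length = k + 1 → Sml δ l → (∀ x ∈ l, x ∈ K) →
      c (l.map q) = 0 := by
  choose u hu hy hl using hc
  have := fun x => _root_.continuousOn_iff'.1 hq (u (q x)) (hu _)
  choose V hV hVu using this
  obtain ⟨δ, hδ, h⟩ := lebesgue_number_lemma_of_metric hK hV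
    (fun x hx => mem_iUnion.2 ⟨x, ((hVu x).subset ⟨hy _, hx⟩).1⟩)
  refine ⟨δ, hδ, fun l hlk hs hlK => ?_⟩
  obtain ⟨x, hx⟩ := List.exists_mem_of_length_pos (l := l) (by omega)
  obtain ⟨i, hi⟩ := h x (hlK x hx)
  refine hl (q i) _ (by simpa using hlk) fun z hz => ?_
  obtain ⟨z, hz', rfl⟩ := List.mem_map.1 hz
  exact ((hVu i).superset ⟨hi (hs z hz' x hx), hlK z hz'⟩).1

lemma exists_normalise [TopologicalSpace Y] {A : Set X} {q : X → Y} {k : ℕ} (hk : 1 ≤ k)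
    (hq : ∀ a ∈ A, ∀ a' ∈ A, q a = q a') {φ : List Y → R}
    (h : ∀ a ∈ A, ∃ u, IsOpen u ∧ q a ∈ u ∧ ∀ l : List Y, l.length = k + 1 → (∀ x ∈ l, x ∈ u) →
      dL φ l = 0) :
    ∃ (θ : List Y → R) (w : Set Y), IsOpen w ∧ (∀ a ∈ A, q a ∈ w) ∧
      ∀ l : List Y, l.length = k → (∀ x ∈ l, x ∈ w) → φ l - dL θ l = 0 := by
  rcases A.eq_empty_or_nonempty with rfl | ⟨a, ha⟩
  · refine ⟨0, ∅, isOpen_empty, by simp, fun l hl hx => ?_⟩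
    obtain ⟨x, hx'⟩ := List.exists_mem_of_length_pos (l := l) (by omega)
    exact (hx x hx').elim
  · obtain ⟨u, hu, hau, hl⟩ := h a ha
    refine ⟨fun m => φ (q a :: m), u, hu, fun a' ha' => hq a ha a' ha' ▸ hau, fun l hlk hx => ?_⟩
    exact hl (q a :: l) (by simp [hlk]) (by simpa using ⟨hau, hx⟩)

/-- The map `q` collapses the subset `A` of `K` to a point and is otherwise injective on `K`;
the map `j` is a section of it. -/
structure Collapse [TopologicalSpace X] [TopologicalSpace Y] (K A : Set X) (q : X → Y)
    (j : Y → X) : Prop where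
  cont : ContinuousOn q K
  qj : ∀ y, q (j y) = y
  jq : ∀ x ∈ K, x ∉ A → j (q x) = x
  jK : ∀ y, j y ∈ K
  const : ∀ a ∈ A, ∀ a' ∈ A, q a = q a'
  jA : ∀ a ∈ A, j (q a) ∈ A
  openA : ∀ V, IsOpen V → A ⊆ V → IsOpen (j ⁻¹' V)
  openD : ∀ V, IsOpen V → Disjoint V A → IsOpen (j ⁻¹' V)

open Classical in
lemma Collapse.onePoint [MetricSpace X] {K A : Set X} (hK : IsCompact K) (hA : IsClosed A)
    (hAK : A ⊆ K) {a : X} (ha : a ∈ A) {B : Set X} (hB : B = K \ A) :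
    Collapse K A (fun x => if h : x ∈ B then ((⟨x, h⟩ : B) : OnePoint B) else OnePoint.infty)
      (fun y => y.elim a Subtype.val) := by
  have hB : ∀ x, x ∈ B ↔ x ∈ K ∧ x ∉ A := fun x => by rw [hB]; rfl
  have hcpt : ∀ V, IsOpen V → A ⊆ V → IsCompact ((Subtype.val : B → X) ⁻¹' V)ᶜ := by
    intro V hV hAV
    rw [Subtype.isCompact_iff]
    convert hK.diff hV using 1
    ext x
    constructor
    · rintro ⟨x, h, rfl⟩
      exact ⟨((hB x).1 x.2).1, h⟩
    · rintro ⟨h, h'⟩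
      exact ⟨⟨x, (hB x).2 ⟨h, fun hx => h' (hAV hx)⟩⟩, h', rfl⟩
  refine ⟨?_, ?_, ?_, ?_, ?_, ?_, ?_, ?_⟩
  · rw [_root_.continuousOn_iff']
    intro u hu
    rw [OnePoint.isOpen_def] at hu
    obtain ⟨V, hV, hVu⟩ := isOpen_induced_iff.1 hu.2
    by_cases hinf : OnePoint.infty ∈ u
    · have hc := (Subtype.isCompact_iff.1 (hu.1 hinf)).isClosed
      refine ⟨_, hc.isOpen_compl, ?_⟩
      ext x
      by_cases hx : x ∈ B
      · simp [hx]
      · simp [hx, hinf]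
    · refine ⟨V ∩ Aᶜ, hV.inter hA.isOpen_compl, ?_⟩
      ext x
      by_cases hx : x ∈ B
      · have := Set.ext_iff.1 hVu ⟨x, hx⟩
        simp only [mem_preimage] at this
        simp [hx, this, ((hB x).1 hx).2]
      · have := hB x
        simp only [mem_inter_iff, mem_preimage, hx, dite_false, hinf, mem_compl_iff]
        tauto
  · intro y
    induction y using OnePoint.rec with
    | infty => simp [hB, ha]
    | coe y => simp
  · intro x hx hxA
    simp [hB, hx, hxA]
  · intro y
    induction y using OnePoint.rec with
    | infty => exact hAK ha
    | coe y => exact ((hB y).1 y.2).1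
  · intro x hx y hy
    simp [hB, hx, hy]
  · intro x hx
    simpa [hB, hx] using ha
  · intro V hV hAV
    rw [OnePoint.isOpen_def]
    exact ⟨fun _ => hcpt V hV hAV, hV.preimage continuous_subtype_val⟩
  · intro V hV hAV
    rw [OnePoint.isOpen_def]
    exact ⟨fun h => (disjoint_left.1 hAV h ha).elim, hV.preimage continuous_subtype_val⟩

open Classical in
lemma Collapse.subtype [TopologicalSpace X] {B : Set X} (b : B) :
    Collapse B ∅ (fun x => if h : x ∈ B then (⟨x, h⟩ : B) else b) Subtype.val where
  cont := by
    rw [continuousOn_iff_continuous_domRestrict]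
    convert continuous_id
    ext x
    simp
  qj y := by simp
  jq x hx _ := by simp [hx]
  jK y := y.2
  const := by simp
  jA := by simp
  openA V hV _ := hV.preimage continuous_subtype_val
  openD V hV _ := hV.preimage continuous_subtype_val

lemma map_map_self {q : X → Y} {j : Y → X} {l : List X} (h : ∀ x ∈ l, j (q x) = x) :
    (l.map q).map j = l := by
  rw [List.map_map]
  conv_rhs => rw [← List.map_id l]
  exact List.map_congr_left h

lemma Sml.of_dist [MetricSpace X] {m : List X} {x : X} {r δ : ℝ} (h : ∀ y ∈ m, dist y x < r)
    (hr : 2 * r ≤ δ) : Sml δ m := fun y hy z hz => by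
  have := h y hy
  have h2 := h z hz
  rw [dist_comm] at h2
  linarith [dist_triangle y x z]

lemma exists_dist_lt_of_isOpen [MetricSpace X] {A V : Set X} (hA : IsCompact A) (hV : IsOpen V)
    (hAV : A ⊆ V) : ∃ δ > 0, ∀ x, (∃ a ∈ A, dist x a < δ) → x ∈ V := by
  obtain ⟨δ, hδ, h⟩ := hA.exists_thickening_subset_open hV hAV
  exact ⟨δ, hδ, fun x hx => h (Metric.mem_thickening_iff.2 hx)⟩

section Cut

variable [MetricSpace X] {A : Set X} {j : Y → X}

/-- Pulling back along `j` and extending by zero near the collapsed point. -/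
def cut (A : Set X) (j : Y → X) (η : ℝ) (c : List X → R) (m : List Y) : R :=
  open Classical in if ∃ y ∈ m, ∃ a ∈ A, dist (j y) a < η then 0 else c (m.map j)

lemma cut_eq_zero {η : ℝ} (c : List X → R) {m : List Y}
    (h : ∃ y ∈ m, ∃ a ∈ A, dist (j y) a < η) : cut A j η c m = 0 := if_pos h

lemma cut_eq {η δ : ℝ} {c : List X → R} {k : ℕ} (hη : η ≤ δ) (hc : ∀ l : List X, l.length = k →
      Sml δ l → (∃ x ∈ l, ∃ a ∈ A, dist x a < δ) → c l = 0) {m : List Y} (hm : m.length = k)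
    (hs : Sml δ (m.map j)) : cut A j η c m = c (m.map j) := by
  by_cases h : ∃ y ∈ m, ∃ a ∈ A, dist (j y) a < η
  · rw [cut_eq_zero c h]
    obtain ⟨y, hy, a, ha, hd⟩ := h
    exact (hc _ (by simpa using hm) hs ⟨j y, List.mem_map_of_mem hy, a, ha, hd.trans_le hη⟩).symm
  · exact if_neg h

lemma dL_cut_eq_zero {η : ℝ} (c : List X → R) {l : List Y} (hk : 2 ≤ l.length)
    (h : ∀ y ∈ l, ∃ a ∈ A, dist (j y) a < η) : dL (cut A j η c) l = 0 :=
  dL_eq_zero fun m hm hml => by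
    obtain ⟨y, hy⟩ := List.exists_mem_of_length_pos (l := m) (by omega)
    exact cut_eq_zero c ⟨y, hy, h y (hm.subset hy)⟩

lemma dL_cut_eq {η δ : ℝ} {c : List X → R} {k : ℕ} (hη : η ≤ δ) (hc : ∀ l : List X, l.length = k →
      Sml δ l → (∃ x ∈ l, ∃ a ∈ A, dist x a < δ) → c l = 0) {l : List Y} (hl : l.length = k + 1)
    (hs : Sml δ (l.map j)) : dL (cut A j η c) l = dL c (l.map j) := by
  rw [← dL_comp_map]
  refine dL_congr fun m hm hml => cut_eq hη hc (by omega) (hs.sub ?_)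
  exact List.map_subset j hm.subset

end Cut

section Transfer

variable [MetricSpace X] [TopologicalSpace Y] {K A : Set X} {q : X → Y} {j : Y → X}

lemma Collapse.isOpen_near (h : Collapse K A q j) {η : ℝ} (hη : 0 < η) :
    IsOpen {y | ∃ a ∈ A, dist (j y) a < η} := by
  have := h.openA (Metric.thickening η A) Metric.isOpen_thickening
    (Metric.self_subset_thickening hη A)
  convert this using 1
  ext y
  simp [Metric.mem_thickening_iff]

lemma Collapse.isOpen_far (h : Collapse K A q j) (hA : IsClosed A) (x : X) (r : ℝ) :
    IsOpen {y | dist (j y) x < r ∧ j y ∉ A} :=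
  h.openD (Metric.ball x r ∩ Aᶜ) (Metric.isOpen_ball.inter hA.isOpen_compl)
    (disjoint_left.2 fun _ hx => hx.2)

/-- Vanishing of the cohomology of the quotient gives relative vanishing. -/
theorem Collapse.relVan [CompactSpace X] (h : Collapse univ A q j) (hA : IsClosed A) {k : ℕ}
    (hk : 1 ≤ k) (hY : ASL R Y k) : RelVan R k A := by
  intro c hc hcA
  obtain ⟨δ₁, hδ₁, hc⟩ := LocZ.univ_iff.1 hc
  obtain ⟨δ₂, hδ₂, hcA⟩ := hcA
  set η := min δ₁ δ₂ with hηd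
  have hη : 0 < η := lt_min hδ₁ hδ₂
  have le1 : η ≤ δ₁ := min_le_left _ _
  have le2 : η ≤ δ₂ := min_le_right _ _
  have hq : Continuous q := continuousOn_univ.1 h.cont
  obtain ⟨ψ, hψ⟩ := hY (cut A j η c) fun y => by
    by_cases hy : j y ∈ A
    · exact ⟨_, h.isOpen_near hη, ⟨j y, hy, by simpa using hη⟩,
        fun l hl hx => dL_cut_eq_zero c (by omega) hx⟩
    · refine ⟨_, h.isOpen_far hA (j y) (η / 2), ⟨by simpa using hη, hy⟩, fun l hl hx => ?_⟩
      have hs : Sml η (l.map j) := Sml.of_dist (x := j y) (r := η / 2)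
        (List.forall_mem_map.2 fun z hz => (hx z hz).1) (by linarith)
      rw [dL_cut_eq le2 hcA hl (hs.mono le2)]
      exact hc _ (by simpa using hl) (hs.mono le1)
  obtain ⟨θ, w, hw, hAw, hθ⟩ := exists_normalise (A := A) (q := q) hk h.const (φ := ψ)
    fun a ha => by
      obtain ⟨u, hu, hau, hlu⟩ := hψ (q a)
      refine ⟨_, hu.inter (h.isOpen_near hη), ⟨hau, _, h.jA a ha, by simpa using hη⟩,
        fun l hl hx => ?_⟩
      have h1 : _ - _ = (0 : R) := hlu l hl fun x hxl => (hx x hxl).1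
      obtain ⟨x, hxl⟩ := List.exists_mem_of_length_pos (l := l) (by omega)
      rwa [cut_eq_zero c ⟨x, hxl, (hx x hxl).2⟩, zero_sub, neg_eq_zero] at h1
  refine ⟨fun m => ψ (m.map q) - dL θ (m.map q), ?_, ?_⟩
  · obtain ⟨δ, hδ, hδw⟩ := exists_dist_lt_of_isOpen hA.isCompact (hw.preimage hq)
      (fun a ha => hAw a ha)
    refine ⟨δ / 2, by positivity, fun l hl hs ⟨x, hx, a, ha, hd⟩ => hθ _ (by simpa using hl)
      (List.forall_mem_map.2 fun z hz => ?_)⟩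
    exact hδw z ⟨a, ha, by linarith [dist_triangle z x a, hs z hz x hx]⟩
  · obtain ⟨δ₃, hδ₃, h3⟩ := LZ.exists_Sml isCompact_univ h.cont hψ
    refine LocZ.univ_iff.2 ⟨min δ₂ δ₃, lt_min hδ₂ hδ₃, fun l hl hs => ?_⟩
    have h3 := h3 l hl (hs.mono (min_le_right _ _)) fun _ _ => trivial
    have h4 : dL (fun m => ψ (m.map q) - dL θ (m.map q)) l = dL ψ (l.map q) := by
      rw [dL_comp_map q (fun m => ψ m - dL θ m), dL_sub, dL_dL, sub_zero]
    rw [h4]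
    suffices hcl : c l = cut A j η c (l.map q) by rw [hcl]; exact h3
    by_cases hn : ∃ x ∈ l, ∃ a ∈ A, dist x a < η
    · obtain ⟨x, hx, a, ha, hd⟩ := hn
      rw [hcA l hl (hs.mono (min_le_left _ _)) ⟨x, hx, a, ha, hd.trans_le le2⟩]
      refine (cut_eq_zero c ⟨q x, List.mem_map_of_mem hx, ?_⟩).symm
      by_cases hxA : x ∈ A
      · exact ⟨_, h.jA x hxA, by simpa using hη⟩
      · exact ⟨a, ha, by rwa [h.jq x trivial hxA]⟩
    · have hj : ∀ x ∈ l, j (q x) = x := fun x hx =>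
        h.jq x trivial fun hxA => hn ⟨x, hx, x, hxA, by simpa using hη⟩
      have hm : (l.map q).map j = l := map_map_self hj
      rw [cut, if_neg, hm]
      rintro ⟨y, hy, hy'⟩
      obtain ⟨x, hx, rfl⟩ := List.mem_map.1 hy
      rw [hj x hx] at hy'
      exact hn ⟨x, hx, hy'⟩

/-- Relative vanishing for a pair with compact complement. -/
theorem Collapse.relVan_compl [CompactSpace X] (h : Collapse K ∅ q j) (hA : IsClosed A)
    (hK : IsClosed K) (hKA : K = Aᶜ) {k : ℕ} (hk : 1 ≤ k) (hY : ASL R Y k) : RelVan R k A := by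
  classical
  intro c hc hcA
  obtain ⟨δ₁, hδ₁, hc⟩ := LocZ.univ_iff.1 hc
  obtain ⟨δ₂, hδ₂, hcA⟩ := hcA
  obtain ⟨ε, hε, hεA⟩ := exists_dist_lt_of_isOpen hA.isCompact hK.isOpen_compl
    (by rw [hKA, compl_compl])
  simp only [hKA, compl_compl] at hεA
  obtain ⟨ψ, hψ⟩ := hY (fun m => c (m.map j)) fun y => by
    refine ⟨_, h.isOpen_far isClosed_empty (j y) (δ₁ / 2), ⟨by simpa using hδ₁, by simp⟩,
      fun l hl hx => ?_⟩
    rw [dL_comp_map]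
    refine hc _ (by simpa using hl) (Sml.of_dist (x := j y) (r := δ₁ / 2)
      (List.forall_mem_map.2 fun z hz => (hx z hz).1) (by linarith))
  refine ⟨fun m => if ∃ x ∈ m, x ∈ A then 0 else ψ (m.map q), ?_, ?_⟩
  · exact ⟨ε, hε, fun l hl hs ⟨x, hx, hn⟩ => if_pos ⟨x, hx, hεA x hn⟩⟩
  · obtain ⟨δ₃, hδ₃, h3⟩ := LZ.exists_Sml hK.isCompact h.cont hψ
    refine LocZ.univ_iff.2 ⟨min ε (min δ₂ δ₃), by positivity, fun l hl hs => ?_⟩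
    have hs3 := hs.mono ((min_le_right _ _).trans (min_le_right _ _))
    have hs2 := hs.mono ((min_le_right _ _).trans (min_le_left _ _))
    by_cases hn : ∃ x ∈ l, x ∈ A
    · obtain ⟨x, hx, hxA⟩ := hn
      rw [hcA l hl hs2 ⟨x, hx, x, hxA, by simpa using hδ₂⟩, zero_sub, neg_eq_zero]
      refine dL_eq_zero fun m hm hml => if_pos ?_
      obtain ⟨y, hy⟩ := List.exists_mem_of_length_pos (l := m) (by omega)
      exact ⟨y, hy, hεA y ⟨x, hxA, (hs y (hm.subset hy) x hx).trans_le (min_le_left _ _)⟩⟩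
    · have hlK : ∀ x ∈ l, x ∈ K := fun x hx => by
        rw [hKA]
        exact fun hxA => hn ⟨x, hx, hxA⟩
      have h3 := h3 l hl hs3 hlK
      have hm : (l.map q).map j = l :=
        map_map_self fun x hx => h.jq x (hlK x hx) (by simp)
      have h4 : dL (fun m => if ∃ x ∈ m, x ∈ A then 0 else ψ (m.map q)) l = dL ψ (l.map q) := by
        rw [← dL_comp_map]
        exact dL_congr fun m hml _ => if_neg fun ⟨x, hx, hxA⟩ => hn ⟨x, hml.subset hx, hxA⟩
      rw [h4]
      rwa [hm] at h3

/-- Relative vanishing gives vanishing of the cohomology of the quotient. -/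
theorem Collapse.ASL [CompactSpace X] (h : Collapse K A q j) (hA : IsClosed A)
    (hK : IsClosed K) (hAK : A ⊆ K) {k : ℕ} (hk : 1 ≤ k) (hRK : RelVan R (k + 1) K)
    (hRA : RelVan R k A) : ASL R Y k := by
  intro φ hφ
  rcases K.eq_empty_or_nonempty with rfl | hKne
  · exact ⟨0, fun y => (h.jK y).elim⟩
  obtain ⟨θ, w, hw, hAw, hθ⟩ := exists_normalise (A := A) (q := q) (k := k + 1) (by omega) h.const
    (φ := φ) fun a ha => hφ (q a)
  have hφ' : LZ (k + 2) (dL fun l => φ l - dL θ l) := by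
    have : dL (fun l => φ l - dL θ l) = dL φ := funext fun l => by
      rw [dL_sub, dL_dL, sub_zero]
    rwa [this]
  set φ' : List Y → R := fun l => φ l - dL θ l with hφd
  obtain ⟨δa, hδa, ha⟩ := LZ.exists_Sml hK.isCompact h.cont hφ'
  obtain ⟨V, hV, hVw⟩ := _root_.continuousOn_iff'.1 h.cont w hw
  obtain ⟨δb, hδb, hb⟩ := exists_dist_lt_of_isOpen hA.isCompact hV
    fun a ha => (hVw.subset ⟨hAw a ha, hAK ha⟩).1
  have hbw : ∀ x ∈ K, (∃ a ∈ A, dist x a < δb) → q x ∈ w := fun x hx hn =>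
    (hVw.superset ⟨hb x hn, hx⟩).1
  have : ∀ x : X, ∃ z ∈ K, ∀ a ∈ K, dist x z ≤ dist x a := fun x => by
    obtain ⟨z, hz, hd⟩ := hK.isCompact.exists_infDist_eq_dist hKne x
    exact ⟨z, hz, fun a ha => hd ▸ Metric.infDist_le_dist_of_mem ha⟩
  choose ρ hρK hρ using this
  have hρid : ∀ x ∈ K, ρ x = x := fun x hx => by
    have := hρ x x hx
    rw [dist_self] at this
    exact (dist_le_zero.1 this).symm
  set c : List X → R := fun l => φ' (l.map fun x => q (ρ x)) with hcd
  have hc : ∀ l : List Y, c (l.map j) = φ' l := fun l => by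
    have : (l.map j).map (fun x => q (ρ x)) = l :=
      map_map_self fun y _ => by rw [hρid _ (h.jK y), h.qj]
    simp only [hcd, this]
  have hdc : LocZ (k + 2) K (dL c) := by
    refine ⟨δa / 8, by positivity, fun l hl hs ⟨x, hx, a, haK, hd⟩ => ?_⟩
    have h1 := ha (l.map ρ) (by simpa using hl) (Sml.of_dist (x := a) (r := δa / 2)
      (List.forall_mem_map.2 fun z hz => ?_) (by linarith)) (List.forall_mem_map.2 fun z _ => hρK z)
    · rw [List.map_map] at h1
      rw [hcd, dL_comp_map]
      exact h1
    · linarith [hρ z a haK, dist_triangle z x a, dist_triangle_left (ρ z) a z, hs z hz x hx]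
  have hcA : LocZ (k + 1) A c := by
    refine ⟨δb / 5, by positivity, fun l hl hs ⟨x, hx, a, haA, hd⟩ => ?_⟩
    refine hθ _ (by simpa using hl) (List.forall_mem_map.2 fun z hz => ?_)
    refine hbw _ (hρK z) ⟨a, haA, ?_⟩
    linarith [hρ z a (hAK haA), dist_triangle z x a, dist_triangle_left (ρ z) a z, hs z hz x hx]
  obtain ⟨e, he, hce⟩ := hRK (dL c) ((LocZ.zero (A := R)).imp fun l _ _ => dL_dL c l) hdc
  obtain ⟨b, hbA, hceb⟩ := hRA (fun l => c l - e l)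
    (hce.imp fun l _ h0 => by rw [dL_sub]; exact h0)
    (hcA.imp₂ (he.mono hAK) fun l _ h1 h2 => by rw [h1, h2, sub_zero])
  obtain ⟨δ₁, hδ₁, h1⟩ := LocZ.univ_iff.1 hceb
  obtain ⟨δ₂, hδ₂, h2⟩ := he
  obtain ⟨δ₃, hδ₃, h3⟩ := hbA
  obtain ⟨η, hη, le1, le2, le3, leb⟩ : ∃ η > 0, η ≤ δ₁ ∧ η ≤ δ₂ ∧ η ≤ δ₃ ∧ η ≤ δb :=
    ⟨min (min δ₁ δ₂) (min δ₃ δb), by positivity, by simp, by simp, by simp, by simp⟩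
  refine ⟨fun m => θ m + cut A j η b m, fun y => ?_⟩
  have hgoal : ∀ l, φ l - dL (fun m => θ m + cut A j η b m) l = φ' l - dL (cut A j η b) l :=
    fun l => by rw [dL_add, hφd]; ring
  simp only [hgoal]
  by_cases hy : j y ∈ A
  · refine ⟨_, h.isOpen_near hη, ⟨j y, hy, by simpa using hη⟩, fun l hl hx => ?_⟩
    rw [dL_cut_eq_zero b (by omega) hx, sub_zero]
    refine hθ l hl fun z hz => ?_
    obtain ⟨a, haA, hd⟩ := hx z hz
    have := hbw _ (h.jK z) ⟨a, haA, hd.trans_le leb⟩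
    rwa [h.qj] at this
  · refine ⟨_, h.isOpen_far hA (j y) (η / 2), ⟨by simpa using hη, hy⟩, fun l hl hx => ?_⟩
    have hs : Sml η (l.map j) := Sml.of_dist (x := j y) (r := η / 2)
      (List.forall_mem_map.2 fun z hz => (hx z hz).1) (by linarith)
    rw [dL_cut_eq le3 h3 hl (hs.mono le3), ← hc]
    obtain ⟨x, hxl⟩ := List.exists_mem_of_length_pos (l := l) (by omega)
    have h2 := h2 (l.map j) (by simpa using hl) (hs.mono le2)
      ⟨j x, List.mem_map_of_mem hxl, j x, h.jK x, by simpa using hδ₂⟩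
    have h1 := h1 (l.map j) (by simpa using hl) (hs.mono le1)
    rwa [h2, sub_zero] at h1

end Transfer

/-! ### Cohomological dimension -/

lemma cohDim_le_iff [TopologicalSpace X] {N : ℕ} : cohDim R X ≤ (N : ℕ∞) ↔
    ∀ m, N < m → ∀ B : Set X, LocallyCompactSpace B → ¬ Nontrivial (AS.Hc R m B) := by
  unfold cohDim
  rw [sSup_le_iff]
  constructor
  · intro h m hm B hB hn
    exact absurd (Nat.cast_le.1 (h m ⟨m, rfl, B, hB, hn⟩)) (by omega)
  · rintro h _ ⟨m, rfl, B, hB, hn⟩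
    exact Nat.cast_le.2 (not_lt.1 fun hm => h m hm B hB hn)

lemma Hc_iff [TopologicalSpace X] {k : ℕ} (hk : 1 ≤ k) : ¬ Nontrivial (AS.Hc R k X) ↔
    (CompactSpace X → ASL R X k) ∧ (¬ CompactSpace X → ASL R (OnePoint X) k) := by
  obtain ⟨m, rfl⟩ : ∃ m, k = m + 1 := ⟨k - 1, by omega⟩
  unfold AS.Hc
  split_ifs with h
  · simp [h, ASH_iff]
  · simp [h, ASH_iff]

lemma isClosed_closure_diff [MetricSpace X] {B : Set X} [LocallyCompactSpace B] :
    IsClosed (closure B \ B) := by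
  rw [← isOpen_compl_iff, isOpen_iff_mem_nhds]
  intro x hx
  by_cases hxB : x ∈ B
  · obtain ⟨N, hN, hxN⟩ := exists_compact_mem_nhds (⟨x, hxB⟩ : B)
    obtain ⟨U, hU, hUN⟩ := mem_nhds_subtype _ _ _ |>.1 hxN
    have hNc := (Subtype.isCompact_iff.1 hN).isClosed
    filter_upwards [interior_mem_nhds.2 hU] with y hy hyB
    have h1 : y ∈ closure (interior U ∩ B) := isOpen_interior.inter_closure ⟨hy, hyB.1⟩
    have h2 : interior U ∩ B ⊆ Subtype.val '' N := fun z hz =>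
      ⟨⟨z, hz.2⟩, hUN (show z ∈ U from interior_subset hz.1), rfl⟩
    obtain ⟨z, -, rfl⟩ := closure_minimal h2 hNc h1
    exact hyB.2 z.2
  · filter_upwards [isClosed_closure.isOpen_compl.mem_nhds (fun h => hx ⟨h, hxB⟩ : x ∈ (closure B)ᶜ)]
      with y hy h using hy h.1

/-- Cohomological dimension at most `N` amounts to vanishing of the relative cohomology of all
closed pairs in degrees above `N`. -/
theorem cohDim_le_iff_relVan [MetricSpace X] [CompactSpace X] {N : ℕ} :
    cohDim R X ≤ (N : ℕ∞) ↔ ∀ k > N, ∀ A : Set X, IsClosed A → RelVan R k A := by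
  rw [cohDim_le_iff]
  constructor
  · intro h k hk A hA
    have hB := (Hc_iff (by omega)).1 (h k hk Aᶜ hA.isOpen_compl.locallyCompactSpace)
    by_cases hc : CompactSpace (Aᶜ : Set X)
    · have hK := (isCompact_iff_compactSpace.2 hc).isClosed
      rcases (Aᶜ).eq_empty_or_nonempty with he | ⟨b, hb⟩
      · rw [compl_empty_iff] at he
        subst he
        exact fun c _ hcA => ⟨fun _ => 0, LocZ.zero, hcA.imp fun l _ h0 => by simp [h0, dL_zero]⟩
      · exact (Collapse.subtype ⟨b, hb⟩).relVan_compl hA hK rfl (by omega) (hB.1 hc)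
    · have : A.Nonempty := by
        by_contra he
        rw [not_nonempty_iff_eq_empty] at he
        subst he
        exact hc (isCompact_iff_compactSpace.1 (by simpa using isCompact_univ))
      obtain ⟨a, ha⟩ := this
      exact (Collapse.onePoint isCompact_univ hA (subset_univ _) ha
        (compl_eq_univ_sdiff A)).relVan hA (by omega) (hB.2 hc)
  · intro h k hk B hB
    refine (Hc_iff (by omega)).2 ⟨fun hc => ?_, fun hc => ?_⟩
    · rcases B.eq_empty_or_nonempty with rfl | ⟨b, hb⟩
      · exact fun φ _ => ⟨0, fun y => y.2.elim⟩
      · have hK := (isCompact_iff_compactSpace.2 hc).isClosed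
        exact (Collapse.subtype ⟨b, hb⟩).ASL isClosed_empty hK (empty_subset _) (by omega)
          (h _ (by omega) _ hK) (h _ hk _ isClosed_empty)
    · have hA : IsClosed (closure B \ B) := isClosed_closure_diff
      have : (closure B \ B).Nonempty := by
        by_contra he
        rw [not_nonempty_iff_eq_empty, sdiff_eq_empty] at he
        exact hc (isCompact_iff_compactSpace.1
          (isClosed_of_closure_subset he).isCompact)
      obtain ⟨a, ha⟩ := this
      refine (Collapse.onePoint isClosed_closure.isCompact hA sdiff_subset ha ?_).ASL hA
        isClosed_closure sdiff_subset (by omega) (h _ (by omega) _ isClosed_closure) (h _ hk _ hA)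
      rw [sdiff_sdiff_cancel_left subset_closure]

theorem cohDim_algebra [MetricSpace X] [CompactSpace X] {N : ℕ} (K F : Type*) [Field K] [Field F]
    [Algebra K F] (h : cohDim K X ≤ (N : ℕ∞)) : cohDim F X ≤ (N : ℕ∞) :=
  cohDim_le_iff_relVan.2 fun k hk A hA => (cohDim_le_iff_relVan.1 h k hk A hA).algebra

end ListChain

/-- **Lemma 14** (Dranishnikov–West).  For a compact metric space `X` the following are
equivalent: (1) `dim_F X ≤ n` for all fields `F`; (2) `dim_{ℤ/pℤ} X ≤ n` for all primes `p`
and `dim_ℚ X ≤ n`; (3) `dim_ℤ (X × X) ≤ 2n + 1`. -/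
theorem cohDim_field_tfae (X : Type) [MetricSpace X] [CompactSpace X] (n : ℕ) :
    ((∀ (F : Type) (_ : Field F), cohDim F X ≤ (n : ℕ∞)) ↔
      ((∀ p : ℕ, p.Prime → cohDim (ZMod p) X ≤ (n : ℕ∞)) ∧ cohDim ℚ X ≤ (n : ℕ∞))) ∧
    (((∀ p : ℕ, p.Prime → cohDim (ZMod p) X ≤ (n : ℕ∞)) ∧ cohDim ℚ X ≤ (n : ℕ∞)) ↔
      cohDim ℤ (X × X) ≤ 2 * (n : ℕ∞) + 1) := by
  have hcast : (2 * (n : ℕ∞) + 1) = ((2 * n + 1 : ℕ) : ℕ∞) := by push_cast; rfl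
  rw [hcast]
  refine ⟨⟨fun h => ⟨fun p hp => ?_, h ℚ inferInstance⟩, fun ⟨hp, h0⟩ F _ => ?_⟩,
    ⟨fun ⟨hp, h0⟩ => ?_, fun h => ⟨fun p hp => ?_, ?_⟩⟩⟩
  · have := Fact.mk hp
    exact h (ZMod p) inferInstance
  · obtain ⟨p, hF⟩ := CharP.exists F
    rcases CharP.char_is_prime_or_zero F p with hpp | rfl
    · have := Fact.mk hpp
      let := ZMod.algebra F p
      exact ListChain.cohDim_algebra (ZMod p) F (hp p hpp)
    · have := CharP.charP_to_charZero F
      exact ListChain.cohDim_algebra ℚ F h0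
  · rw [ListChain.cohDim_le_iff_relVan] at h0 ⊢
    intro k hk A hA
    obtain ⟨k, rfl⟩ : ∃ i, k = i + 2 := ⟨k - 2, by omega⟩
    refine ListChain.RelVan.int (fun p hpp => ?_) (ListChain.relVan_prod h0 (by omega) A)
    exact ListChain.relVan_prod (ListChain.cohDim_le_iff_relVan.1 (hp p hpp)) (by omega) A
  · rw [ListChain.cohDim_le_iff_relVan] at h ⊢
    have := Fact.mk hp
    intro k hk A hA
    exact ListChain.relVan_of_prod (by omega) (fun C hC => ListChain.RelVan.zmod hp.ne_zero
      (h _ (by omega) C hC) (h _ (by omega) C hC)) hA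
  · rw [ListChain.cohDim_le_iff_relVan] at h ⊢
    intro k hk A hA
    exact ListChain.relVan_of_prod (by omega) (fun C hC => ListChain.RelVan.rat (h _ (by omega) C hC)) hA
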